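/- Let p be an odd prime. The Haar-measure proportion of monic degree-4 polynomials in Z_p[x] that are irreducible equals (p^{12} + p^{11} + 2p^{10} + 4p^9 - 2p^8 + p^7 + 3p^6 - 6p^5 + 6p^4 - 4p^3 - 2p^2 - 4) / (4(p+1)(p^2+1)(p^9-1)). -/

import Mathlib

open MeasureTheory Polynomial

noncomputable instance (p : ℕ) [Fact p.Prime] : MeasurableSpace ℤ_[p] := borel _
instance (p : ℕ) [Fact p.Prime] : BorelSpace ℤ_[p] := ⟨rfl⟩

namespace QuarticDensity

/-- A compact group is tiled by the cosets of the image of an open embedding `T`, so the measure of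
a set is the average of the measures of its pullbacks along the maps `x ↦ r i + T x`. -/
theorem measureReal_eq_average_cosets {G ι : Type*} [AddCommGroup G] [TopologicalSpace G]
    [IsTopologicalAddGroup G] [CompactSpace G] [MeasurableSpace G] [BorelSpace G]
    (m : Measure G) [m.IsAddHaarMeasure] [IsProbabilityMeasure m] [Fintype ι]
    (T : G →+ G) (hT : Topology.IsOpenEmbedding T) (r : ι → G)
    (hr : ∀ g, ∃! i, g ∈ Set.range fun x => r i + T x) (S : Set G) :
    m.real S = (Fintype.card ι : ℝ)⁻¹ * ∑ i, m.real {x | r i + T x ∈ S} := by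
  have hH : (m.comap T).IsAddHaarMeasure :=
    Measure.IsAddHaarMeasure.comap (mH := inferInstance) m hT
  have hfac := Measure.isAddInvariant_eq_smul_of_compactSpace (m.comap T) m
  set κ := Measure.addHaarScalarFactor (m.comap T) m with hκ
  have hopen : ∀ i, IsOpen (Set.range fun x => r i + T x) := fun i =>
    ((Homeomorph.addLeft (r i)).isOpenEmbedding.comp hT).isOpen_range
  have piece : ∀ (S : Set G) (i : ι),
      m.real (S ∩ Set.range fun x => r i + T x) = κ * m.real {x | r i + T x ∈ S} := by
    intro S i
    have himage : S ∩ (Set.range fun x => r i + T x) =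
        (fun y => -r i + y) ⁻¹' (T '' {x | r i + T x ∈ S}) := by
      ext g
      simp only [Set.mem_inter_iff, Set.mem_range, Set.mem_preimage, Set.mem_image,
        Set.mem_ofPred_eq]
      constructor
      · rintro ⟨hg, x, rfl⟩
        exact ⟨x, hg, by abel⟩
      · rintro ⟨x, hx, hxg⟩
        have : r i + T x = g := by rw [hxg]; abel
        exact ⟨this ▸ hx, x, this⟩
    rw [himage, Measure.real, measure_preimage_add, ← hT.measurableEmbedding.comap_apply, hfac]
    simp [Measure.real]
  have total : ∀ S : Set G, m.real S = κ * ∑ i, m.real {x | r i + T x ∈ S} := by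
    intro S
    rw [Finset.mul_sum, ← Finset.sum_congr rfl fun i _ => piece S i]
    have hcover : ⋃ i, (Set.range fun x => r i + T x) = Set.univ :=
      Set.eq_univ_of_forall fun g => Set.mem_iUnion.2 (hr g).exists
    have hdisj : Pairwise (Function.onFun Disjoint fun i => Set.range fun x => r i + T x) := by
      intro i j hij
      rw [Function.onFun, Set.disjoint_left]
      intro g hi hj
      exact hij ((hr g).unique hi hj)
    have key : m S = ∑ i, m (S ∩ Set.range fun x => r i + T x) := by
      have h := measure_iUnion (μ := m.restrict S) hdisj fun i => (hopen i).measurableSet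
      rw [hcover, Measure.restrict_apply_univ, tsum_fintype] at h
      rw [h]
      exact Finset.sum_congr rfl fun i _ => by
        rw [Measure.restrict_apply (hopen i).measurableSet, Set.inter_comm]
    rw [Measure.real, key, ENNReal.toReal_sum fun i _ => measure_ne_top _ _]
    rfl
  have huniv := total Set.univ
  simp only [Set.mem_univ, Set.ofPred_true, probReal_univ, Finset.sum_const, Finset.card_univ,
    nsmul_eq_mul, mul_one] at huniv
  rw [total S, eq_inv_of_mul_eq_one_left huniv.symm]

variable (p : ℕ) [Fact p.Prime]

/-- The Haar probability measure on `ℤ_p`. -/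
noncomputable def haarProb : Measure ℤ_[p] := Measure.addHaarMeasure ⊤

instance : (haarProb p).IsAddHaarMeasure := by unfold haarProb; infer_instance

instance : IsProbabilityMeasure (haarProb p) :=
  ⟨by simpa [haarProb] using Measure.addHaarMeasure_self (G := ℤ_[p]) (K₀ := ⊤)⟩

/-- The Haar probability measure on `ℤ_p³`. -/
noncomputable abbrev haarProb₃ : Measure (ℤ_[p] × ℤ_[p] × ℤ_[p]) :=
  (haarProb p).prod ((haarProb p).prod (haarProb p))

instance : ((haarProb p).prod (haarProb p)).IsAddHaarMeasure :=
  Measure.prod.instIsAddHaarMeasure _ _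

instance : (haarProb₃ p).IsAddHaarMeasure :=
  Measure.prod.instIsAddHaarMeasure _ _

instance : ((haarProb p).prod (haarProb₃ p)).IsAddHaarMeasure :=
  Measure.prod.instIsAddHaarMeasure _ _

variable {p}

/-- The density of a property of triples of `p`-adic integers. -/
noncomputable def dens (P : ℤ_[p] → ℤ_[p] → ℤ_[p] → Prop) : ℝ :=
  (haarProb₃ p).real {x | P x.1 x.2.1 x.2.2}

theorem dens_true : dens (fun _ _ _ : ℤ_[p] => True) = 1 := by simp [dens]

theorem dens_false : dens (fun _ _ _ : ℤ_[p] => False) = 0 := by simp [dens]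

theorem dens_le_one (P : ℤ_[p] → ℤ_[p] → ℤ_[p] → Prop) : dens P ≤ 1 := measureReal_le_one

theorem dens_nonneg (P : ℤ_[p] → ℤ_[p] → ℤ_[p] → Prop) : 0 ≤ dens P := measureReal_nonneg

/-- The lift `r + p x` of a residue `r`. -/
noncomputable def lift (r : ZMod p) (x : ℤ_[p]) : ℤ_[p] := (r.val : ℤ_[p]) + p * x

theorem toZMod_lift (r : ZMod p) (x : ℤ_[p]) : PadicInt.toZMod (lift r x) = r := by
  simp [lift]

theorem exists_lift_eq (x : ℤ_[p]) (r : ZMod p) (h : PadicInt.toZMod x = r) :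
    ∃ y, lift r y = x := by
  have h0 : PadicInt.toZMod (x - (r.val : ℤ_[p])) = 0 := by simp [h]
  rw [← RingHom.mem_ker, PadicInt.ker_toZMod, PadicInt.maximalIdeal_eq_span_p,
    Ideal.mem_span_singleton] at h0
  obtain ⟨y, hy⟩ := h0
  exact ⟨y, by rw [lift, ← hy]; ring⟩

theorem lift_zero (x : ℤ_[p]) : lift 0 x = p * x := by simp [lift]

theorem isOpenEmbedding_p_mul : Topology.IsOpenEmbedding fun x : ℤ_[p] => (p : ℤ_[p]) * x := by
  have hinj : Function.Injective fun x : ℤ_[p] => (p : ℤ_[p]) * x :=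
    mul_right_injective₀ (by exact_mod_cast (Fact.out : p.Prime).ne_zero)
  refine ⟨((by fun_prop : Continuous fun x : ℤ_[p] => (p : ℤ_[p]) * x).isClosedEmbedding
    hinj).isEmbedding, ?_⟩
  have : (Set.range fun x : ℤ_[p] => (p : ℤ_[p]) * x) = {x | ‖x‖ < 1} := by
    ext x
    rw [Set.mem_ofPred_eq, PadicInt.norm_lt_one_iff_dvd]
    exact ⟨fun ⟨y, hy⟩ => ⟨y, hy.symm⟩, fun ⟨y, hy⟩ => ⟨y, hy.symm⟩⟩
  rw [this]
  exact isOpen_lt continuous_norm continuous_const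

/-- Multiplication by `p` on `ℤ_p`. -/
noncomputable abbrev pMul : ℤ_[p] →+ ℤ_[p] := AddMonoidHom.mulLeft (p : ℤ_[p])

theorem dens_split_fst (P : ℤ_[p] → ℤ_[p] → ℤ_[p] → Prop) :
    dens P = (p : ℝ)⁻¹ * ∑ r : ZMod p, dens fun b c d => P (lift r b) c d := by
  have h := measureReal_eq_average_cosets (haarProb₃ p)
    (AddMonoidHom.prodMap pMul (AddMonoidHom.id (ℤ_[p] × ℤ_[p])))
    (isOpenEmbedding_p_mul.prodMap Topology.IsOpenEmbedding.id)
    (fun r : ZMod p => ((r.val : ℤ_[p]), 0)) ?_ {x | P x.1 x.2.1 x.2.2}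
  · simpa [dens, lift, ZMod.card] using h
  · rintro ⟨b, c, d⟩
    refine ⟨PadicInt.toZMod b, ?_, ?_⟩
    · obtain ⟨y, hy⟩ := exists_lift_eq b _ rfl
      exact ⟨(y, c, d), by simpa [lift] using hy⟩
    · rintro r ⟨⟨y, c', d'⟩, hy⟩
      rw [← toZMod_lift r y]
      simp only [AddMonoidHom.prodMap] at hy
      simpa [lift] using congrArg (fun t => PadicInt.toZMod t.1) hy

theorem dens_split_snd (P : ℤ_[p] → ℤ_[p] → ℤ_[p] → Prop) :
    dens P = (p : ℝ)⁻¹ * ∑ r : ZMod p, dens fun b c d => P b (lift r c) d := by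
  have h := measureReal_eq_average_cosets (haarProb₃ p)
    (AddMonoidHom.prodMap (AddMonoidHom.id ℤ_[p])
      (AddMonoidHom.prodMap pMul (AddMonoidHom.id ℤ_[p])))
    (Topology.IsOpenEmbedding.id.prodMap
      (isOpenEmbedding_p_mul.prodMap Topology.IsOpenEmbedding.id))
    (fun r : ZMod p => (0, (r.val : ℤ_[p]), 0)) ?_ {x | P x.1 x.2.1 x.2.2}
  · simpa [dens, lift, ZMod.card] using h
  · rintro ⟨b, c, d⟩
    refine ⟨PadicInt.toZMod c, ?_, ?_⟩
    · obtain ⟨y, hy⟩ := exists_lift_eq c _ rfl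
      exact ⟨(b, y, d), by simpa [lift] using hy⟩
    · rintro r ⟨⟨b', y, d'⟩, hy⟩
      rw [← toZMod_lift r y]
      simp only [AddMonoidHom.prodMap] at hy
      simpa [lift] using congrArg (fun t => PadicInt.toZMod t.2.1) hy

theorem dens_split_trd (P : ℤ_[p] → ℤ_[p] → ℤ_[p] → Prop) :
    dens P = (p : ℝ)⁻¹ * ∑ r : ZMod p, dens fun b c d => P b c (lift r d) := by
  have h := measureReal_eq_average_cosets (haarProb₃ p)
    (AddMonoidHom.prodMap (AddMonoidHom.id ℤ_[p])
      (AddMonoidHom.prodMap (AddMonoidHom.id ℤ_[p]) pMul))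
    (Topology.IsOpenEmbedding.id.prodMap
      (Topology.IsOpenEmbedding.id.prodMap isOpenEmbedding_p_mul))
    (fun r : ZMod p => (0, 0, (r.val : ℤ_[p]))) ?_ {x | P x.1 x.2.1 x.2.2}
  · simpa [dens, lift, ZMod.card] using h
  · rintro ⟨b, c, d⟩
    refine ⟨PadicInt.toZMod d, ?_, ?_⟩
    · obtain ⟨y, hy⟩ := exists_lift_eq d _ rfl
      exact ⟨(b, c, y), by simpa [lift] using hy⟩
    · rintro r ⟨⟨b', c', y⟩, hy⟩
      rw [← toZMod_lift r y]
      simp only [AddMonoidHom.prodMap] at hy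
      simpa [lift] using congrArg (fun t => PadicInt.toZMod t.2.2) hy

/-- The coefficients `B, C` and the quantity `D = B² - 4E` of the quartic `x⁴ + B x² + C x + E`
obtained from `x⁴ + 4 q x³ + a₂ x² + a₁ x + a₀` by the substitution `x ↦ x - q`. -/
def depress {R : Type*} [CommRing R] (q a₂ a₁ a₀ : R) : R × R × R :=
  (a₂ - 6 * q ^ 2, a₁ - 2 * a₂ * q + 8 * q ^ 3,
    (a₂ - 6 * q ^ 2) ^ 2 - 4 * (a₀ - a₁ * q + a₂ * q ^ 2 - 3 * q ^ 4))

theorem measurePreserving_unit_mul_add (u : ℤ_[p]) (hu : IsUnit u) (t : ℤ_[p]) :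
    MeasurePreserving (fun x => u * x + t) (haarProb p) (haarProb p) := by
  obtain ⟨v, rfl⟩ := hu
  have h1 : MeasurePreserving (AddMonoidHom.mulLeft (v : ℤ_[p])) (haarProb p) (haarProb p) :=
    AddMonoidHom.measurePreserving (by simpa using continuous_const_mul _)
      (fun y => ⟨(↑v⁻¹ : ℤ_[p]) * y, by simp⟩) rfl
  exact (measurePreserving_add_right (haarProb p) t).comp h1

theorem measurePreserving_depress (h4 : IsUnit (4 : ℤ_[p])) (q : ℤ_[p]) :
    MeasurePreserving (fun x : ℤ_[p] × ℤ_[p] × ℤ_[p] => depress q x.1 x.2.1 x.2.2)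
      (haarProb₃ p) (haarProb₃ p) := by
  have hone : ∀ t : ℤ_[p], MeasurePreserving (fun x => x + t) (haarProb p) (haarProb p) :=
    fun t => measurePreserving_add_right _ t
  have hg : ∀ a₂ : ℤ_[p], MeasurePreserving
      (fun x : ℤ_[p] × ℤ_[p] => (x.1 + (-2 * a₂ * q + 8 * q ^ 3),
        -4 * x.2 + ((a₂ - 6 * q ^ 2) ^ 2 - 4 * (- x.1 * q + a₂ * q ^ 2 - 3 * q ^ 4))))
      ((haarProb p).prod (haarProb p)) ((haarProb p).prod (haarProb p)) := by
    intro a₂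
    refine (hone _).skew_product
      (g := fun a₁ a₀ =>
        -4 * a₀ + ((a₂ - 6 * q ^ 2) ^ 2 - 4 * (- a₁ * q + a₂ * q ^ 2 - 3 * q ^ 4)))
      (Continuous.measurable (by unfold Function.uncurry; fun_prop))
      (Filter.Eventually.of_forall fun a₁ => ?_)
    exact (measurePreserving_unit_mul_add (-4) h4.neg _).map_eq
  have h := (hone (-6 * q ^ 2)).skew_product
    (g := fun (a₂ : ℤ_[p]) (x : ℤ_[p] × ℤ_[p]) => (x.1 + (-2 * a₂ * q + 8 * q ^ 3),
        -4 * x.2 + ((a₂ - 6 * q ^ 2) ^ 2 - 4 * (- x.1 * q + a₂ * q ^ 2 - 3 * q ^ 4))))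
    (Continuous.measurable (by unfold Function.uncurry; fun_prop))
    (Filter.Eventually.of_forall fun a₂ => (hg a₂).map_eq)
  convert h using 2 with x
  simp only [depress, Prod.mk.injEq]
  refine ⟨by ring, by ring, by ring⟩

theorem measurePreserving_depress_all (h4 : IsUnit (4 : ℤ_[p])) (v : ℤ_[p]) :
    MeasurePreserving (fun x : ℤ_[p] × ℤ_[p] × ℤ_[p] × ℤ_[p] =>
      (x.1, depress (v * x.1) x.2.1 x.2.2.1 x.2.2.2))
      ((haarProb p).prod (haarProb₃ p)) ((haarProb p).prod (haarProb₃ p)) :=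
  (MeasurePreserving.id (haarProb p)).skew_product
    (g := fun (a₃ : ℤ_[p]) (x : ℤ_[p] × ℤ_[p] × ℤ_[p]) => depress (v * a₃) x.1 x.2.1 x.2.2)
    (Continuous.measurable (by unfold Function.uncurry depress; fun_prop))
    (Filter.Eventually.of_forall fun a₃ => (measurePreserving_depress h4 _).map_eq)

theorem depress_injective {R : Type*} [CommRing R] (h4 : IsUnit (4 : R)) (v : R) :
    Function.Injective fun x : R × R × R × R =>
      (x.1, depress (v * x.1) x.2.1 x.2.2.1 x.2.2.2) := by
  rintro ⟨a₃, a₂, a₁, a₀⟩ ⟨b₃, b₂, b₁, b₀⟩ h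
  simp only [depress, Prod.mk.injEq] at h
  obtain ⟨rfl, h₂, h₁, h₀⟩ := h
  obtain rfl : a₂ = b₂ := by linear_combination h₂
  obtain rfl : a₁ = b₁ := by linear_combination h₁
  obtain rfl : a₀ = b₀ := h4.mul_left_cancel (by linear_combination -h₀)
  rfl

/-- The proportion, for any Haar measure on `ℤ_p⁴`, of the monic quartics whose depressed form
satisfies `P`. -/
theorem haar_proportion_eq_dens (h4 : IsUnit (4 : ℤ_[p])) (v : ℤ_[p])
    (μ : Measure (Fin 4 → ℤ_[p])) [μ.IsAddHaarMeasure] (P : ℤ_[p] → ℤ_[p] → ℤ_[p] → Prop) :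
    (μ {a | P (depress (v * a 3) (a 2) (a 1) (a 0)).1 (depress (v * a 3) (a 2) (a 1) (a 0)).2.1
      (depress (v * a 3) (a 2) (a 1) (a 0)).2.2}).toReal / (μ Set.univ).toReal = dens P := by
  let e : (Fin 4 → ℤ_[p]) →+ ℤ_[p] × ℤ_[p] × ℤ_[p] × ℤ_[p] :=
    { toFun := fun a => (a 3, a 2, a 1, a 0)
      map_zero' := rfl
      map_add' := fun _ _ => rfl }
  have hecont : Continuous e := by
    change Continuous fun a : Fin 4 → ℤ_[p] => (a 3, a 2, a 1, a 0)
    fun_prop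
  have heinj : Function.Injective e := by
    intro a b h
    obtain ⟨h3, h2, h1, h0⟩ : a 3 = b 3 ∧ a 2 = b 2 ∧ a 1 = b 1 ∧ a 0 = b 0 := by
      simpa [e, Prod.ext_iff] using h
    funext i
    fin_cases i <;> assumption
  have hesurj : Function.Surjective e := fun x =>
    ⟨![x.2.2.2, x.2.2.1, x.2.1, x.1], rfl⟩
  have hμ0 : μ Set.univ ≠ 0 := NeZero.ne _
  have hμt : μ Set.univ ≠ ⊤ := measure_ne_top _ _
  have hH : ((μ Set.univ)⁻¹ • μ).IsAddHaarMeasure :=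
    Measure.IsAddHaarMeasure.smul μ (ENNReal.inv_ne_zero.2 hμt) (ENNReal.inv_ne_top.2 hμ0)
  have he : MeasurePreserving e ((μ Set.univ)⁻¹ • μ) ((haarProb p).prod (haarProb₃ p)) :=
    AddMonoidHom.measurePreserving hecont hesurj (by simp)
  have hΦ := measurePreserving_depress_all h4 v
  have hcomp := hΦ.comp he
  have hemb : MeasurableEmbedding
      ((fun x : ℤ_[p] × ℤ_[p] × ℤ_[p] × ℤ_[p] =>
        (x.1, depress (v * x.1) x.2.1 x.2.2.1 x.2.2.2)) ∘ e) := by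
    refine (Continuous.isClosedEmbedding ?_
      ((depress_injective h4 v).comp heinj)).measurableEmbedding
    refine Continuous.comp ?_ hecont
    unfold depress
    fun_prop
  have h := hcomp.measure_preimage_emb hemb (Set.univ ×ˢ {x | P x.1 x.2.1 x.2.2})
  rw [Measure.prod_prod, measure_univ (μ := haarProb p), one_mul, Measure.smul_apply,
    smul_eq_mul] at h
  rw [dens, Measure.real, ← h, ENNReal.toReal_mul, ENNReal.toReal_inv, div_eq_inv_mul]
  congr 3
  ext a
  simp [e]

/-- A solution `(s, w)` of the system `s w = c`, `κ w² = D + β s² + η s⁴`. -/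
def Solvable {R : Type*} [CommRing R] (κ β η c D : R) : Prop :=
  ∃ s w, s * w = c ∧ κ * w ^ 2 = D + β * s ^ 2 + η * s ^ 4

/-- A root of the quartic `x⁴ + b x² + c x + (b² - D) / 4`. -/
def HasRoot {R : Type*} [CommRing R] (b c D : R) : Prop :=
  ∃ r, (2 * r ^ 2 + b) ^ 2 + 4 * c * r = D

/-- The quartic `x⁴ + b x² + c x + (b² - D) / 4` has a root or is a product of two quadratics. -/
def Red {R : Type*} [CommRing R] (b c D : R) : Prop :=
  HasRoot b c D ∨ Solvable 1 (2 * b) 1 c D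

section Irreducible

variable {R : Type*} [CommRing R]

/-- The monic quartic with the given lower coefficients. -/
noncomputable def quartic (a : Fin 4 → R) : R[X] := X ^ 4 + ∑ i : Fin 4, C (a i) * X ^ (i : ℕ)

theorem quartic_eq (a : Fin 4 → R) :
    quartic a = X ^ 4 + (C (a 0) + C (a 1) * X + C (a 2) * X ^ 2 + C (a 3) * X ^ 3) := by
  simp [quartic, Fin.sum_univ_four]

theorem natDegree_quartic [Nontrivial R] (a : Fin 4 → R) : (quartic a).natDegree = 4 := by
  rw [quartic_eq]; compute_degree!

theorem monic_quartic [Nontrivial R] (a : Fin 4 → R) : (quartic a).Monic := by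
  rw [quartic_eq]; monicity!

theorem quartic_injective : Function.Injective (quartic : (Fin 4 → R) → R[X]) := by
  intro a b h
  funext i
  have hc := congrArg (fun f => coeff f (i : ℕ)) h
  simp only [quartic_eq] at hc
  fin_cases i <;> simpa [coeff_X, coeff_C, coeff_X_pow] using hc

theorem exists_quartic_eq {f : R[X]} (hf : f.Monic) (hd : f.natDegree = 4) :
    ∃ a, quartic a = f := by
  refine ⟨fun i => f.coeff i, ?_⟩
  conv_rhs => rw [hf.as_sum, hd]
  rw [quartic, Fin.sum_univ_eq_sum_range (fun i => C (f.coeff i) * X ^ i)]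

theorem monic_quadratic_eq {f : R[X]} (hf : f.Monic) (hd : f.natDegree = 2) :
    f = X ^ 2 + C (f.coeff 1) * X + C (f.coeff 0) := by
  conv_lhs => rw [hf.as_sum, hd]
  simp [Finset.sum_range_succ]
  ring

theorem irreducible_quartic_iff [IsDomain R] (a : Fin 4 → R) :
    Irreducible (quartic a) ↔
      ¬ ((∃ r, r ^ 4 + a 3 * r ^ 3 + a 2 * r ^ 2 + a 1 * r + a 0 = 0) ∨
        ∃ m₁ n₁ m₂ n₂ : R, m₁ + m₂ = a 3 ∧ n₁ + n₂ + m₁ * m₂ = a 2 ∧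
          m₁ * n₂ + m₂ * n₁ = a 1 ∧ n₁ * n₂ = a 0) := by
  have hne : quartic a ≠ 1 := fun h => by
    have := natDegree_quartic a
    rw [h, natDegree_one] at this
    omega
  rw [(monic_quartic a).irreducible_iff_lt_natDegree_lt hne, natDegree_quartic]
  constructor
  · rintro h (⟨r, hr⟩ | ⟨m₁, n₁, m₂, n₂, h3, h2, h1, h0⟩)
    · refine h (X - C r) (monic_X_sub_C r) (by simp) (dvd_iff_isRoot.2 ?_)
      rw [IsRoot.def, quartic_eq]
      simp only [eval_add, eval_mul, eval_pow, eval_X, eval_C]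
      linear_combination hr
    · refine h (X ^ 2 + C m₁ * X + C n₁) (by monicity!) ?_ ⟨X ^ 2 + C m₂ * X + C n₂, ?_⟩
      · have : (X ^ 2 + C m₁ * X + C n₁ : R[X]).natDegree = 2 := by compute_degree!
        simp [this]
      · rw [quartic_eq, ← h3, ← h2, ← h1, ← h0]
        simp only [C_add, C_mul]
        ring
  · intro h f hf hdeg hdvd
    apply h
    obtain ⟨g, hg⟩ := hdvd
    have hgm : g.Monic := hf.of_mul_monic_left (hg ▸ monic_quartic a)
    have hdg : f.natDegree + g.natDegree = 4 := by
      rw [← hf.natDegree_mul hgm, ← hg, natDegree_quartic]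
    have hdf : f.natDegree = 1 ∨ f.natDegree = 2 := by
      simp only [Finset.mem_Ioc] at hdeg
      omega
    rcases hdf with hdf | hdf
    · left
      have hf1 : f = X - C (-f.coeff 0) := by
        conv_lhs => rw [hf.as_sum, hdf]
        simp
      have hroot : (quartic a).IsRoot (-f.coeff 0) :=
        dvd_iff_isRoot.1 (hf1 ▸ ⟨g, hg⟩)
      rw [IsRoot.def, quartic_eq] at hroot
      simp only [eval_add, eval_mul, eval_pow, eval_X, eval_C] at hroot
      exact ⟨-f.coeff 0, by linear_combination hroot⟩
    · right
      have hf2 := monic_quadratic_eq hf hdf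
      have hg2 := monic_quadratic_eq hgm (by omega)
      refine ⟨f.coeff 1, f.coeff 0, g.coeff 1, g.coeff 0, ?_⟩
      generalize f.coeff 1 = m₁ at *
      generalize f.coeff 0 = n₁ at *
      generalize g.coeff 1 = m₂ at *
      generalize g.coeff 0 = n₂ at *
      let a' : Fin 4 → R := ![n₁ * n₂, m₁ * n₂ + m₂ * n₁, n₁ + n₂ + m₁ * m₂, m₁ + m₂]
      have ha : a' = a := by
        apply quartic_injective
        rw [hg, hf2, hg2, quartic_eq]
        simp [a']
        ring
      subst ha
      simp [a']

theorem irreducible_quartic_iff_not_red [IsDomain R] {v : R} (hv : 4 * v = 1) (a : Fin 4 → R) :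
    Irreducible (quartic a) ↔
      ¬ Red (depress (v * a 3) (a 2) (a 1) (a 0)).1 (depress (v * a 3) (a 2) (a 1) (a 0)).2.1
        (depress (v * a 3) (a 2) (a 1) (a 0)).2.2 := by
  rw [irreducible_quartic_iff, Red, HasRoot, Solvable]
  obtain ⟨q, hq⟩ : ∃ q, q = v * a 3 := ⟨_, rfl⟩
  have h3 : a 3 = 4 * q := by rw [hq]; linear_combination - a 3 * hv
  have h4 : (4 : R) ≠ 0 := left_ne_zero_of_mul_eq_one hv
  rw [← hq, h3]
  generalize a 2 = a₂
  generalize a 1 = a₁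
  generalize a 0 = a₀
  simp only [depress]
  refine not_congr (or_congr ⟨?_, ?_⟩ ⟨?_, ?_⟩)
  · rintro ⟨r, hr⟩
    exact ⟨r + q, by linear_combination 4 * hr⟩
  · rintro ⟨r, hr⟩
    refine ⟨r - q, mul_left_cancel₀ h4 ?_⟩
    linear_combination hr
  · rintro ⟨m₁, n₁, m₂, n₂, h3, h2, h1, h0⟩
    refine ⟨m₁ - 2 * q, n₂ - n₁ + 2 * q * (m₁ - 2 * q), ?_, ?_⟩
    · obtain rfl : m₂ = 4 * q - m₁ := by linear_combination h3
      subst h2 h1 h0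
      ring
    · obtain rfl : m₂ = 4 * q - m₁ := by linear_combination h3
      subst h2 h1 h0
      ring
  · rintro ⟨s, w, h1, h2⟩
    refine ⟨2 * q + s, 2 * v * (a₂ - 6 * q ^ 2 + s ^ 2 - w) + q ^ 2 + s * q, 2 * q - s,
      2 * v * (a₂ - 6 * q ^ 2 + s ^ 2 + w) + q ^ 2 - s * q, by ring, ?_, ?_, ?_⟩
    · linear_combination (a₂ - 6 * q ^ 2 + s ^ 2) * hv
    · apply mul_left_cancel₀ h4
      linear_combination 4 * h1 + (8 * q * (a₂ - 6 * q ^ 2 + s ^ 2) + 4 * s * w) * hv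
    · apply mul_left_cancel₀ h4
      linear_combination (-1 : R) * h2 + 4 * q * h1 +
        ((4 * v + 1) * ((a₂ - 6 * q ^ 2 + s ^ 2) ^ 2 - w ^ 2) +
          4 * (q ^ 2 * (a₂ - 6 * q ^ 2 + s ^ 2) + s * q * w)) * hv

end Irreducible

section FiniteFieldCount

open Finset in
open scoped Classical in
theorem card_irreducible_quartic (p : ℕ) [Fact p.Prime] :
    4 * #{a : Fin 4 → ZMod p | Irreducible (quartic a)} + p ^ 2 = p ^ 4 := by
  have hp1 : 1 < p := (Fact.out : p.Prime).one_lt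
  let L := GaloisField p 4
  have : Fintype L := Fintype.ofFinite L
  have hL : Fintype.card L = p ^ 4 := by
    rw [← Nat.card_eq_fintype_card, GaloisField.card p 4 (by norm_num)]
  have hfix : ∀ x : L, x ^ p ^ 4 = x := fun x => by rw [← hL, FiniteField.pow_card]
  have hdvd : ∀ x : L, ∀ n, minpoly (ZMod p) x ∣ X ^ p ^ n - X ↔ x ^ p ^ n = x := by
    intro x n
    rw [minpoly.dvd_iff]
    simp [sub_eq_zero]
  have hirr : ∀ x : L, Irreducible (minpoly (ZMod p) x) := fun x =>
    minpoly.irreducible (Algebra.IsIntegral.isIntegral x)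
  have hdeg : ∀ x : L, (minpoly (ZMod p) x).natDegree = 4 ↔ ¬ x ^ p ^ 2 = x := by
    intro x
    have h4 := (hirr x).natDegree_dvd_iff_dvd_X_pow_card_pow_sub_X (n := 4)
    have h2 := (hirr x).natDegree_dvd_iff_dvd_X_pow_card_pow_sub_X (n := 2)
    rw [Nat.card_zmod, hdvd] at h4 h2
    rw [← h2]
    have h4' := h4.2 (hfix x)
    have hle := Nat.le_of_dvd (by norm_num) h4'
    interval_cases (minpoly (ZMod p) x).natDegree <;> simp_all
  have hsplit : ((X ^ p ^ 4 - X : (ZMod p)[X]).map (algebraMap (ZMod p) L)).Splits := by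
    have := FiniteField.splits_X_pow_card_sub_X (K := L) p
    rw [hL] at this
    exact this
  have hne : (X ^ p ^ 4 - X : (ZMod p)[X]) ≠ 0 :=
    FiniteField.X_pow_card_pow_sub_X_ne_zero _ (by norm_num) hp1
  have hsplit' : ∀ f : (ZMod p)[X], f ∣ X ^ p ^ 4 - X →
      (f.map (algebraMap (ZMod p) L)).Splits := fun f hf =>
    hsplit.of_dvd ((Polynomial.map_ne_zero_iff (algebraMap (ZMod p) L).injective).2 hne)
      (Polynomial.map_dvd _ hf)
  have hsub : #{x : L | x ^ p ^ 2 = x} = p ^ 2 := by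
    have hcard := card_rootSet_eq_natDegree (K := L)
      (galois_poly_separable (K := ZMod p) p (p ^ 2) (dvd_pow_self p (by norm_num)))
      (hsplit' _ (dvd_pow_pow_sub_self_of_dvd (by norm_num)))
    rw [FiniteField.X_pow_card_pow_sub_X_natDegree_eq _ (by norm_num) hp1] at hcard
    refine Eq.trans ?_ hcard
    rw [← Set.toFinset_card]
    congr 1
    ext x
    have hne2 : (X ^ p ^ 2 - X : (ZMod p)[X]) ≠ 0 :=
      FiniteField.X_pow_card_pow_sub_X_ne_zero _ (by norm_num) hp1
    simp [mem_rootSet, hne2, sub_eq_zero]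
  have hfib : #{x : L | ¬ x ^ p ^ 2 = x} =
      ∑ a ∈ ({a : Fin 4 → ZMod p | Irreducible (quartic a)} : Finset _),
        #{x ∈ ({x : L | ¬ x ^ p ^ 2 = x} : Finset L) | minpoly (ZMod p) x = quartic a} := by
    rw [← card_biUnion]
    · congr 1
      ext x
      simp only [mem_filter, mem_univ, true_and, mem_biUnion]
      constructor
      · intro hx
        obtain ⟨a, ha⟩ := exists_quartic_eq
          (minpoly.monic (Algebra.IsIntegral.isIntegral (R := ZMod p) x)) ((hdeg x).2 hx)
        exact ⟨a, ha ▸ hirr x, hx, ha.symm⟩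
      · rintro ⟨a, -, hx, -⟩
        exact hx
    · intro a _ b _ hab
      rw [Function.onFun, disjoint_left]
      intro x hxa hxb
      exact hab (quartic_injective ((mem_filter.1 hxa).2.symm.trans (mem_filter.1 hxb).2))
  have hfour : ∀ a ∈ ({a : Fin 4 → ZMod p | Irreducible (quartic a)} : Finset _),
      #{x ∈ ({x : L | ¬ x ^ p ^ 2 = x} : Finset L) | minpoly (ZMod p) x = quartic a} = 4 := by
    intro a ha
    replace ha : Irreducible (quartic a) := (mem_filter.1 ha).2
    have hdiv : quartic a ∣ X ^ p ^ 4 - X := by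
      have := (ha.natDegree_dvd_iff_dvd_X_pow_card_pow_sub_X (n := 4)).1
        (by rw [natDegree_quartic])
      rwa [Nat.card_zmod] at this
    have hcard := card_rootSet_eq_natDegree (K := L) (PerfectField.separable_of_irreducible ha)
      (hsplit' _ hdiv)
    rw [natDegree_quartic] at hcard
    refine Eq.trans ?_ hcard
    rw [← Set.toFinset_card]
    congr 1
    ext x
    simp only [mem_filter, mem_univ, true_and, Set.mem_toFinset, mem_rootSet]
    constructor
    · rintro ⟨-, hx⟩
      exact ⟨ha.ne_zero, hx ▸ minpoly.aeval _ x⟩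
    · rintro ⟨-, hx⟩
      have hmin : quartic a = minpoly (ZMod p) x :=
        minpoly.eq_of_irreducible_of_monic ha hx (monic_quartic a)
      exact ⟨(hdeg x).1 (hmin ▸ natDegree_quartic a), hmin.symm⟩
  rw [sum_congr rfl hfour, sum_const, smul_eq_mul, mul_comm] at hfib
  have htotal := card_filter_add_card_filter_not (s := (univ : Finset L)) (fun x => x ^ p ^ 2 = x)
  rw [card_univ, hL] at htotal
  omega

open Finset in
open scoped Classical in
theorem card_not_red (p : ℕ) [Fact p.Prime] {v : ZMod p} (hv : 4 * v = 1) :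
    4 * #{t : ZMod p × ZMod p × ZMod p | ¬ Red t.1 t.2.1 t.2.2} + p = p ^ 3 := by
  have h := card_irreducible_quartic p
  let Φ : (Fin 4 → ZMod p) → ZMod p × ZMod p × ZMod p × ZMod p := fun a =>
    (a 3, depress (v * a 3) (a 2) (a 1) (a 0))
  have hinj : Function.Injective Φ := by
    intro a b hab
    have h := depress_injective (IsUnit.of_mul_eq_one v hv) v
      (a₁ := (a 3, a 2, a 1, a 0)) (a₂ := (b 3, b 2, b 1, b 0)) hab
    simp only [Prod.mk.injEq] at h
    obtain ⟨h3, h2, h1, h0⟩ := h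
    funext i
    fin_cases i <;> assumption
  have hbij : Function.Bijective Φ :=
    (Fintype.bijective_iff_injective_and_card Φ).2 ⟨hinj, by simp [ZMod.card]; ring⟩
  have hcard : #{a : Fin 4 → ZMod p | Irreducible (quartic a)} =
      #((univ : Finset (ZMod p)) ×ˢ
        ({t | ¬ Red t.1 t.2.1 t.2.2} : Finset (ZMod p × ZMod p × ZMod p))) := by
    refine card_bij (fun a _ => Φ a) ?_ (fun a _ b _ hab => hinj hab) ?_
    · intro a ha
      simpa [Φ] using (irreducible_quartic_iff_not_red hv a).1 (mem_filter.1 ha).2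
    · intro t ht
      obtain ⟨a, rfl⟩ := hbij.2 t
      refine ⟨a, ?_, rfl⟩
      simpa [Φ, irreducible_quartic_iff_not_red hv a] using ht
  rw [hcard, card_product, card_univ, ZMod.card] at h
  have hp : 0 < p := (Fact.out : p.Prime).pos
  exact Nat.eq_of_mul_eq_mul_left hp (by linarith)

end FiniteFieldCount

section Hensel

open PadicInt

variable {p : ℕ} [Fact p.Prime]

@[simp]
theorem toZMod_ofNat (n : ℕ) [n.AtLeastTwo] :
    toZMod (no_index (OfNat.ofNat n : ℤ_[p])) = (OfNat.ofNat n : ZMod p) := map_ofNat _ _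

theorem toZMod_eq_zero_iff (x : ℤ_[p]) : toZMod x = 0 ↔ ∃ y, x = p * y := by
  rw [← RingHom.mem_ker, ker_toZMod, maximalIdeal_eq_span_p, Ideal.mem_span_singleton]
  rfl

theorem toZMod_ne_zero_iff (x : ℤ_[p]) : toZMod x ≠ 0 ↔ ‖x‖ = 1 := by
  rw [Ne, ← RingHom.mem_ker, ker_toZMod, IsLocalRing.mem_maximalIdeal, mem_nonunits_iff, not_not,
    PadicInt.isUnit_iff]

theorem isUnit_of_toZMod_ne_zero {x : ℤ_[p]} (h : toZMod x ≠ 0) : IsUnit x :=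
  PadicInt.isUnit_iff.2 ((toZMod_ne_zero_iff x).1 h)

/-- Hensel's lemma for a simple root modulo `p`. -/
theorem exists_root_of_toZMod (F : ℤ_[p][X]) (a : ℤ_[p]) (h0 : toZMod (F.eval a) = 0)
    (h1 : toZMod (F.derivative.eval a) ≠ 0) : ∃ z, F.eval z = 0 ∧ toZMod z = toZMod a := by
  have h1' := (toZMod_ne_zero_iff _).1 h1
  have h0' : ‖F.eval a‖ < 1 := lt_of_le_of_ne (norm_le_one _) fun h =>
    (toZMod_ne_zero_iff _).2 h h0
  obtain ⟨z, hz, hza, -⟩ := hensels_lemma (F := F) (a := a)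
    (by simpa [Polynomial.aeval_def, Polynomial.eval₂_eq_eval_map, h1'] using h0')
  refine ⟨z, by simpa using hz, ?_⟩
  have : ‖z - a‖ < 1 := by simpa [h1'] using hza
  by_contra hne
  exact this.ne ((toZMod_ne_zero_iff _).1 (by rwa [map_sub, sub_ne_zero]))

theorem exists_toZMod_eq (x : ZMod p) : ∃ y : ℤ_[p], toZMod y = x := ZMod.ringHom_surjective _ x

theorem hasRoot_of_toZMod {b c D : ℤ_[p]} {r : ZMod p}
    (h0 : (2 * r ^ 2 + toZMod b) ^ 2 + 4 * toZMod c * r = toZMod D)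
    (h1 : 8 * r * (2 * r ^ 2 + toZMod b) + 4 * toZMod c ≠ 0) : HasRoot b c D := by
  obtain ⟨a, rfl⟩ := exists_toZMod_eq r
  obtain ⟨z, hz, -⟩ := exists_root_of_toZMod
    ((2 * X ^ 2 + C b) ^ 2 + C (4 * c) * X - C D) a
    (by simpa [sub_eq_zero] using h0)
    (by
      convert h1 using 1
      simp [derivative_pow]
      ring)
  refine ⟨z, ?_⟩
  simpa [sub_eq_zero] using hz

theorem solvable_of_toZMod {κ β η c D : ℤ_[p]} {s w : ZMod p} (hsw : s * w = toZMod c)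
    (h0 : toZMod κ * w ^ 2 = toZMod D + toZMod β * s ^ 2 + toZMod η * s ^ 4)
    (h1 : 2 * toZMod κ * w ^ 2 + 2 * toZMod β * s ^ 2 + 4 * toZMod η * s ^ 4 ≠ 0) :
    Solvable κ β η c D := by
  by_cases hw : w = 0
  · have hs : s ≠ 0 := by rintro rfl; simp [hw] at h1
    obtain ⟨a, rfl⟩ := exists_toZMod_eq s
    obtain ⟨z, hz, hza⟩ := exists_root_of_toZMod
      (C D * X ^ 2 + C β * X ^ 4 + C η * X ^ 6 - C (κ * c ^ 2)) a
      (by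
        simp
        linear_combination (-toZMod a ^ 2) * h0 + toZMod κ * (toZMod a * w + toZMod c) * hsw)
      (by
        have := mul_ne_zero hs h1
        convert this using 1
        simp [derivative_pow]
        linear_combination (-2 * toZMod a) * h0)
    obtain ⟨u, rfl⟩ := isUnit_of_toZMod_ne_zero (hza ▸ hs)
    refine ⟨u, c * ↑u⁻¹, by rw [mul_comm c, Units.mul_inv_cancel_left], ?_⟩
    have hu : (u : ℤ_[p]) * ↑u⁻¹ = 1 := u.mul_inv
    simp at hz
    have hu2 : (u : ℤ_[p]) ^ 2 ≠ 0 := pow_ne_zero _ u.ne_zero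
    refine mul_left_cancel₀ hu2 ?_
    linear_combination -hz + κ * c ^ 2 * (u * ↑u⁻¹ + 1) * hu
  · obtain ⟨a, rfl⟩ := exists_toZMod_eq w
    obtain ⟨z, hz, hza⟩ := exists_root_of_toZMod
      (C κ * X ^ 6 - C D * X ^ 4 - C (β * c ^ 2) * X ^ 2 - C (η * c ^ 4)) a
      (by
        simp
        rw [← hsw]
        linear_combination (toZMod a ^ 4) * h0)
      (by
        have := mul_ne_zero (pow_ne_zero 3 hw) h1
        convert this using 1
        simp [derivative_pow]
        rw [← hsw]
        linear_combination (4 * toZMod a ^ 3) * h0)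
    obtain ⟨u, rfl⟩ := isUnit_of_toZMod_ne_zero (hza ▸ hw)
    refine ⟨c * ↑u⁻¹, u, Units.inv_mul_cancel_right _ _, ?_⟩
    have hu : (u : ℤ_[p]) * ↑u⁻¹ = 1 := u.mul_inv
    simp at hz
    have hu2 : (u : ℤ_[p]) ^ 4 ≠ 0 := pow_ne_zero _ u.ne_zero
    have e2 : (u : ℤ_[p]) ^ 2 * (c * ↑u⁻¹) ^ 2 = c ^ 2 := by
      rw [mul_pow]; linear_combination c ^ 2 * (u * ↑u⁻¹ + 1) * hu
    have e4 : (u : ℤ_[p]) ^ 4 * (c * ↑u⁻¹) ^ 4 = c ^ 4 := by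
      linear_combination ((u : ℤ_[p]) ^ 2 * (c * ↑u⁻¹) ^ 2 + c ^ 2) * e2
    refine mul_left_cancel₀ hu2 ?_
    linear_combination hz - β * u ^ 2 * e2 - η * e4

end Hensel

section SquareCount

variable {p : ℕ} [Fact p.Prime]

theorem two_ne_zero_zmod (hp : p ≠ 2) : (2 : ZMod p) ≠ 0 :=
  Ring.two_ne_zero (by rwa [ZMod.ringChar_zmod_n])

/-- Summation of a function on `ZMod p` that only depends on whether `k x` is zero, a nonzero
square, or a nonsquare. -/
theorem sum_eq_of_isSquare (hp : p ≠ 2) {k : ZMod p} (hk : k ≠ 0) {f : ZMod p → ℝ} {A B C : ℝ}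
    (h0 : f 0 = A) (hsq : ∀ x, x ≠ 0 → IsSquare (k * x) → f x = B)
    (hns : ∀ x, ¬ IsSquare (k * x) → f x = C) :
    ∑ x, f x = A + (p - 1) / 2 * (B + C) := by
  classical
  have hchar : ringChar (ZMod p) ≠ 2 := by rwa [ZMod.ringChar_zmod_n]
  have hf : ∀ x, f x = (B + C) / 2 + (quadraticChar (ZMod p) (k * x) : ℝ) * ((B - C) / 2) +
      if x = 0 then A - (B + C) / 2 else 0 := by
    intro x
    by_cases hx : x = 0
    · simp [hx, h0]
    by_cases hs : IsSquare (k * x)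
    · rw [hsq x hx hs, (quadraticChar_one_iff_isSquare (mul_ne_zero hk hx)).2 hs]
      simp [hx]
      ring
    · rw [hns x hs, quadraticChar_neg_one_iff_not_isSquare.2 hs]
      simp [hx]
      ring
  have hsum : ∑ x : ZMod p, (quadraticChar (ZMod p) (k * x) : ℝ) = 0 := by
    have h := quadraticChar_sum_zero hchar
    rw [← Equiv.sum_comp (Equiv.mulLeft₀ k hk)] at h
    exact_mod_cast h
  simp only [hf, Finset.sum_add_distrib, ← Finset.sum_mul, hsum]
  simp [ZMod.card]
  ring

end SquareCount

section Split

variable {p : ℕ} [Fact p.Prime]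

theorem dens_congr {P Q : ℤ_[p] → ℤ_[p] → ℤ_[p] → Prop} (h : ∀ b c d, P b c d ↔ Q b c d) :
    dens P = dens Q := by
  congr 1
  ext b c d
  exact h b c d

theorem dens_eq_one {P : ℤ_[p] → ℤ_[p] → ℤ_[p] → Prop} (h : ∀ b c d, P b c d) : dens P = 1 := by
  rw [← dens_true (p := p)]
  exact dens_congr fun b c d => iff_true_intro (h b c d)

theorem dens_eq_zero {P : ℤ_[p] → ℤ_[p] → ℤ_[p] → Prop} (h : ∀ b c d, ¬ P b c d) : dens P = 0 := by
  rw [← dens_false (p := p)]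
  exact dens_congr fun b c d => iff_false_intro (h b c d)

theorem average_eq_of_ne_zero {f : ZMod p → ℝ} {A B : ℝ} (h0 : f 0 = B)
    (h : ∀ r, r ≠ 0 → f r = A) :
    (p : ℝ)⁻¹ * ∑ r, f r = (1 - (p : ℝ)⁻¹) * A + (p : ℝ)⁻¹ * B := by
  have hp : (p : ℝ) ≠ 0 := by exact_mod_cast (Fact.out : p.Prime).ne_zero
  have hf : ∀ r, f r = A + if r = 0 then B - A else 0 := by
    intro r
    by_cases hr : r = 0
    · simp [hr, h0]
    · simp [hr, h r hr]
  simp only [hf, Finset.sum_add_distrib]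
  simp [ZMod.card]
  field_simp
  ring

theorem dens_eq_of_fst {P : ℤ_[p] → ℤ_[p] → ℤ_[p] → Prop} {A : ℝ}
    (h : ∀ r, r ≠ 0 → (dens fun b c d => P (lift r b) c d) = A) :
    dens P = (1 - (p : ℝ)⁻¹) * A + (p : ℝ)⁻¹ * dens fun b c d => P ((p : ℤ_[p]) * b) c d := by
  rw [dens_split_fst]
  exact average_eq_of_ne_zero (by simp only [lift_zero]) h

theorem dens_eq_of_snd {P : ℤ_[p] → ℤ_[p] → ℤ_[p] → Prop} {A : ℝ}
    (h : ∀ r, r ≠ 0 → (dens fun b c d => P b (lift r c) d) = A) :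
    dens P = (1 - (p : ℝ)⁻¹) * A + (p : ℝ)⁻¹ * dens fun b c d => P b (p * c) d := by
  rw [dens_split_snd]
  exact average_eq_of_ne_zero (by simp only [lift_zero]) h

theorem dens_eq_of_trd {P : ℤ_[p] → ℤ_[p] → ℤ_[p] → Prop} {A : ℝ}
    (h : ∀ r, r ≠ 0 → (dens fun b c d => P b c (lift r d)) = A) :
    dens P = (1 - (p : ℝ)⁻¹) * A + (p : ℝ)⁻¹ * dens fun b c d => P b c (p * d) := by
  rw [dens_split_trd]
  exact average_eq_of_ne_zero (by simp only [lift_zero]) h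

theorem dens_split_snd_trd (P : ℤ_[p] → ℤ_[p] → ℤ_[p] → Prop) :
    dens P = ((p : ℝ) ^ 2)⁻¹ *
      ∑ t : ZMod p × ZMod p, dens fun b c d => P b (lift t.1 c) (lift t.2 d) := by
  rw [dens_split_snd, Fintype.sum_prod_type, sq, mul_inv, mul_assoc]
  congr 1
  rw [Finset.mul_sum]
  exact Finset.sum_congr rfl fun r _ => dens_split_trd _

theorem dens_split (P : ℤ_[p] → ℤ_[p] → ℤ_[p] → Prop) :
    dens P = ((p : ℝ) ^ 3)⁻¹ * ∑ t : ZMod p × ZMod p × ZMod p,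
      dens fun b c d => P (lift t.1 b) (lift t.2.1 c) (lift t.2.2 d) := by
  rw [dens_split_fst, Fintype.sum_prod_type, pow_succ', mul_inv, mul_assoc]
  congr 1
  rw [Finset.mul_sum]
  exact Finset.sum_congr rfl fun r _ => dens_split_snd_trd _

theorem dens_eq_of_snd_trd {P : ℤ_[p] → ℤ_[p] → ℤ_[p] → Prop}
    (h : ∀ b c d, ¬ (PadicInt.toZMod c = 0 ∧ PadicInt.toZMod d = 0) → P b c d) :
    dens P = 1 - ((p : ℝ) ^ 2)⁻¹ + ((p : ℝ) ^ 2)⁻¹ * dens fun b c d => P b (p * c) (p * d) := by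
  have h1 : ∀ r, r ≠ 0 → (dens fun b c d => P b (lift r c) d) = 1 := fun r hr =>
    dens_eq_one fun b c d => h _ _ _ fun h0 => hr (by rw [← toZMod_lift r c, h0.1])
  have h2 : ∀ r, r ≠ 0 → (dens fun b c d => P b (p * c) (lift r d)) = 1 := fun r hr =>
    dens_eq_one fun b c d => h _ _ _ fun h0 => hr (by rw [← toZMod_lift r d, h0.2])
  rw [dens_eq_of_snd h1, dens_eq_of_trd (P := fun b c d => P b (p * c) d) h2]
  ring

/-- A bounded function with `g = a + ρ · (g ∘ f)` and `ρ < 1` is constant. -/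
theorem eq_of_contraction {α : Type*} {g : α → ℝ} {f : α → α} {a ρ G : ℝ} (hρ0 : 0 ≤ ρ)
    (hρ : ρ < 1) (hg : ∀ x, |g x| ≤ 1) (h : ∀ x, g x = a + ρ * g (f x)) (hG : G = a + ρ * G)
    (x : α) : g x = G := by
  have hiter : ∀ n x, |g x - G| ≤ ρ ^ n * (1 + |G|) := by
    intro n
    induction n with
    | zero =>
      intro x
      have := abs_sub (g x) G
      have := hg x
      simp only [pow_zero, one_mul]
      linarith
    | succ n ih =>
      intro x
      have : g x - G = ρ * (g (f x) - G) := by rw [h x]; linear_combination -hG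
      rw [this, abs_mul, abs_of_nonneg hρ0, pow_succ']
      rw [mul_assoc]
      exact mul_le_mul_of_nonneg_left (ih _) hρ0
  have hlim : Filter.Tendsto (fun n : ℕ => ρ ^ n * (1 + |G|)) Filter.atTop (nhds 0) := by
    simpa using (tendsto_pow_atTop_nhds_zero_of_lt_one hρ0 hρ).mul_const (1 + |G|)
  have := ge_of_tendsto' hlim fun n => hiter n x
  have := abs_nonpos_iff.1 this
  linarith

theorem abs_dens_le_one (P : ℤ_[p] → ℤ_[p] → ℤ_[p] → Prop) : |dens P| ≤ 1 := by
  rw [abs_of_nonneg (dens_nonneg P)]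
  exact dens_le_one P

end Split

section ResidueClasses

open PadicInt

variable {p : ℕ} [Fact p.Prime]

theorem Solvable.map {R S : Type*} [CommRing R] [CommRing S] (f : R →+* S) {κ β η c D : R}
    (h : Solvable κ β η c D) : Solvable (f κ) (f β) (f η) (f c) (f D) := by
  obtain ⟨s, w, h1, h2⟩ := h
  exact ⟨f s, f w, by simp [← h1], by simpa using congrArg f h2⟩

theorem HasRoot.map {R S : Type*} [CommRing R] [CommRing S] (f : R →+* S) {b c D : R}
    (h : HasRoot b c D) : HasRoot (f b) (f c) (f D) := by
  obtain ⟨r, hr⟩ := h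
  refine ⟨f r, ?_⟩
  rw [← hr]
  simp only [map_add, map_mul, map_pow, map_ofNat f]

theorem Red.map {R S : Type*} [CommRing R] [CommRing S] (f : R →+* S) {b c D : R}
    (h : Red b c D) : Red (f b) (f c) (f D) := by
  refine h.imp (HasRoot.map f) fun h => ?_
  have := h.map f
  rwa [map_mul, map_one, map_ofNat f] at this

theorem red_of_hasRoot_toZMod (hp : p ≠ 2) {b c D : ℤ_[p]}
    (h : HasRoot (toZMod b) (toZMod c) (toZMod D))
    (hne : ¬ (toZMod b = 0 ∧ toZMod c = 0 ∧ toZMod D = 0)) : Red b c D := by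
  have h2 := two_ne_zero_zmod hp
  obtain ⟨r, hr⟩ := h
  by_cases h1 : 8 * r * (2 * r ^ 2 + toZMod b) + 4 * toZMod c = 0
  swap
  · exact Or.inl (hasRoot_of_toZMod hr h1)
  have hc : toZMod c = -2 * r * (2 * r ^ 2 + toZMod b) :=
    mul_left_cancel₀ (pow_ne_zero 2 h2) (by linear_combination h1)
  have hD : toZMod D = (2 * r ^ 2 + toZMod b) * (toZMod b - 6 * r ^ 2) := by
    rw [← hr, hc]; ring
  by_cases h6 : 6 * r ^ 2 + toZMod b = 0
  · have hb : toZMod b = -6 * r ^ 2 := by linear_combination h6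
    rw [hb] at hc hD
    have hr0 : r ≠ 0 := by
      rintro rfl
      exact hne ⟨by simp [hb], by simp [hc], by simp [hD]⟩
    refine Or.inl (hasRoot_of_toZMod (r := -3 * r) ?_ ?_)
    · rw [hb, hc, hD]; ring
    · rw [hb, hc]
      have : (2 : ZMod p) ^ 8 * r ^ 3 ≠ 0 := mul_ne_zero (pow_ne_zero _ h2) (pow_ne_zero _ hr0)
      contrapose! this
      linear_combination -this
  · refine Or.inr (solvable_of_toZMod (s := 2 * r) (w := -(2 * r ^ 2 + toZMod b)) ?_ ?_ ?_)
    · rw [hc]; ring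
    · simp [hD]; ring
    · have := mul_ne_zero h2 (pow_ne_zero 2 h6)
      contrapose! this
      simp at this
      linear_combination this

theorem red_of_red_toZMod (hp : p ≠ 2) {b c D : ℤ_[p]}
    (h : Red (toZMod b) (toZMod c) (toZMod D))
    (hne : ¬ (toZMod c = 0 ∧ toZMod D = 0 ∧ (toZMod b = 0 ∨ ¬ IsSquare (-2 * toZMod b)))) :
    Red b c D := by
  have h2 := two_ne_zero_zmod hp
  rcases h with h | ⟨s, w, hsw, h⟩
  · exact red_of_hasRoot_toZMod hp h fun h0 => hne ⟨h0.2.1, h0.2.2, Or.inl h0.1⟩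
  by_cases hJ : 2 * w ^ 2 + 4 * toZMod b * s ^ 2 + 4 * s ^ 4 = 0
  swap
  · refine Or.inr (solvable_of_toZMod hsw (by simpa using h) ?_)
    contrapose! hJ
    simp at hJ
    linear_combination hJ
  have hJ' : w ^ 2 + 2 * toZMod b * s ^ 2 + 2 * s ^ 4 = 0 :=
    mul_left_cancel₀ h2 (by linear_combination hJ)
  by_cases hs : s = 0
  · subst hs
    have hw : w = 0 := by simpa using hJ'
    subst hw
    have hc : toZMod c = 0 := by simpa using hsw.symm
    have hD : toZMod D = 0 := by simpa using h.symm
    have hb : toZMod b ≠ 0 ∧ IsSquare (-2 * toZMod b) := by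
      by_contra hcon
      refine hne ⟨hc, hD, ?_⟩
      tauto
    obtain ⟨hb, r, hr⟩ := hb
    refine Or.inr (solvable_of_toZMod (s := r) (w := 0) (by simp [hc]) ?_ ?_)
    · simp [hD]
      linear_combination r ^ 2 * hr
    · have : (2 : ZMod p) ^ 3 * toZMod b ^ 2 ≠ 0 := mul_ne_zero (pow_ne_zero _ h2) (pow_ne_zero _ hb)
      contrapose! this
      simp at this
      linear_combination this + (4 * r ^ 2 - 4 * toZMod b) * hr
  · refine red_of_hasRoot_toZMod hp ⟨w / (2 * s), ?_⟩ fun h0 => ?_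
    · rw [← hsw]
      field_simp
      linear_combination (4 * s ^ 4) * h + (w ^ 2 + 2 * toZMod b * s ^ 2 + 2 * s ^ 4) * hJ'
    · exact hne ⟨h0.2.1, h0.2.2, Or.inl h0.1⟩

theorem dens_not_red_eq (hp : p ≠ 2) {γ : ℝ} (hγ : ∀ r : ZMod p, ¬ IsSquare (-2 * r) →
      (dens fun b c D => ¬ Red (lift r b) (p * c) (p * D)) = γ) :
    (dens fun b c D : ℤ_[p] => ¬ Red b c D) = ((p : ℝ) ^ 3)⁻¹ * (((p : ℝ) ^ 3 - p) / 4 +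
      (dens fun b c D : ℤ_[p] => ¬ Red (p * b) (p * c) (p * D)) + (p - 1) / 2 * γ) := by
  classical
  have h2 := two_ne_zero_zmod hp
  have hcard := card_not_red p (v := (4 : ZMod p)⁻¹)
    (mul_inv_cancel₀ (by convert pow_ne_zero 2 h2 using 1; norm_num))
  rw [dens_split, add_assoc]
  congr 1
  let f : ZMod p × ZMod p × ZMod p → ℝ := fun t =>
    dens fun b c d => ¬ Red (lift t.1 b) (lift t.2.1 c) (lift t.2.2 d)
  have hf : ∀ t, f t = (if ¬ Red t.1 t.2.1 t.2.2 then 1 else 0) +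
      if t.2 = (0, 0) then f t else 0 := by
    rintro ⟨b, c, D⟩
    by_cases h0 : (c, D) = (0, 0)
    · obtain ⟨rfl, rfl⟩ := Prod.mk.inj h0
      have : Red b 0 0 := Or.inr ⟨0, 0, by simp, by simp⟩
      simp [this]
    · simp only [h0, if_false, add_zero]
      by_cases hred : Red b c D
      · simp only [hred, not_true, if_false]
        refine dens_eq_zero fun b' c' D' => not_not.2 (red_of_red_toZMod hp ?_ ?_)
        · simpa only [toZMod_lift] using hred
        · simp only [toZMod_lift]
          rintro ⟨rfl, rfl, -⟩
          exact h0 rfl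
      · simp only [hred, not_false_iff, if_true]
        refine dens_eq_one fun b' c' D' h => hred ?_
        simpa only [toZMod_lift] using h.map toZMod
  change ∑ t, f t = _
  rw [Finset.sum_congr rfl fun t _ => hf t, Finset.sum_add_distrib]
  congr 1
  · rw [Finset.sum_boole, eq_div_iff (by norm_num), eq_sub_iff_add_eq, mul_comm]
    exact_mod_cast hcard
  · rw [Fintype.sum_prod_type]
    simp only [Finset.sum_ite_eq', Finset.mem_univ, if_true]
    rw [sum_eq_of_isSquare hp (k := -2) (neg_ne_zero.2 h2) (B := 0) (C := γ) rfl]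
    · simp [f, lift_zero]
    · intro r hr hsq
      refine dens_eq_zero fun b' c' D' => not_not.2 (red_of_red_toZMod hp ?_ ?_)
      · simp only [toZMod_lift]
        exact Or.inr ⟨0, 0, by simp, by simp⟩
      · simp only [toZMod_lift]
        tauto
    · intro r hr
      rw [← hγ r hr]
      simp [f, lift_zero]

end ResidueClasses

section NonsquareClass

open PadicInt

variable {p : ℕ} [Fact p.Prime]

theorem natCast_prime_ne_zero : (p : ℤ_[p]) ≠ 0 := by
  exact_mod_cast (Fact.out : p.Prime).ne_zero

theorem solvable_mul_sq_iff {κ β η c D : ℤ_[p]}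
    (h : ∀ s w : ℤ_[p], s * w = p ^ 2 * c → κ * w ^ 2 = p ^ 2 * D + β * s ^ 2 + η * s ^ 4 →
      toZMod s = 0 ∧ toZMod w = 0) :
    Solvable κ β η (p ^ 2 * c) (p ^ 2 * D) ↔ Solvable κ β (p ^ 2 * η) c D := by
  have hp := pow_ne_zero 2 (natCast_prime_ne_zero (p := p))
  constructor
  · rintro ⟨s, w, h1, h2⟩
    obtain ⟨hs, hw⟩ := h s w h1 h2
    obtain ⟨s, rfl⟩ := (toZMod_eq_zero_iff s).1 hs
    obtain ⟨w, rfl⟩ := (toZMod_eq_zero_iff w).1 hw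
    exact ⟨s, w, mul_left_cancel₀ hp (by linear_combination h1),
      mul_left_cancel₀ hp (by linear_combination h2)⟩
  · rintro ⟨s, w, h1, h2⟩
    exact ⟨p * s, p * w, by linear_combination (p : ℤ_[p]) ^ 2 * h1,
      by linear_combination (p : ℤ_[p]) ^ 2 * h2⟩

theorem eq_zero_of_sq_eq_mul_sq {F : Type*} [Field F] {k s w : F} (hk : ¬ IsSquare k)
    (h : w ^ 2 = k * s ^ 2) : s = 0 ∧ w = 0 := by
  have hs : s = 0 := by
    by_contra hs
    exact hk ⟨w / s, by field_simp; linear_combination -h⟩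
  subst hs
  exact ⟨rfl, by simpa using h⟩

open Finset in
open scoped Classical in
/-- For a nonsquare `-k`, the map `(s, w) ↦ (s w, w² - k s²)` is two-to-one on nonzero pairs. -/
theorem card_norm_form (hp : p ≠ 2) {k : ZMod p} (hk : ¬ IsSquare (-k)) :
    2 * #{t : ZMod p × ZMod p | t ≠ 0 ∧ Solvable 1 k 0 t.1 t.2} + 1 = p ^ 2 := by
  have h2 := two_ne_zero_zmod hp
  let f : ZMod p × ZMod p → ZMod p × ZMod p := fun x => (x.1 * x.2, x.2 ^ 2 - k * x.1 ^ 2)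
  have himg : ({t : ZMod p × ZMod p | t ≠ 0 ∧ Solvable 1 k 0 t.1 t.2} : Finset _) =
      ({x | x ≠ 0} : Finset (ZMod p × ZMod p)).image f := by
    ext ⟨c, D⟩
    simp only [mem_filter, mem_univ, true_and, mem_image, Prod.exists, f, Prod.mk.injEq]
    unfold Solvable
    constructor
    · rintro ⟨hne, s, w, h1, h3⟩
      refine ⟨s, w, ?_, h1, by linear_combination h3⟩
      rintro h0
      obtain ⟨rfl, rfl⟩ := Prod.mk.inj h0
      refine hne (Prod.ext ?_ ?_)
      · simpa using h1.symm
      · simpa using h3.symm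
    · rintro ⟨s, w, hne, rfl, rfl⟩
      refine ⟨fun h0 => hne ?_, s, w, rfl, by ring⟩
      obtain ⟨h1, h3⟩ := Prod.mk.inj h0
      rcases mul_eq_zero.1 h1 with rfl | rfl
      · have : w = 0 := by simpa using h3
        simp [this]
      · have hk0 : k ≠ 0 := by rintro rfl; simp at hk
        have : s = 0 := by simpa [hk0] using h3
        simp [this]
  have hfib : ∀ t ∈ ({x | x ≠ 0} : Finset (ZMod p × ZMod p)).image f,
      #{x ∈ ({x | x ≠ 0} : Finset (ZMod p × ZMod p)) | f x = t} = 2 := by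
    intro t ht
    obtain ⟨⟨s, w⟩, hx, rfl⟩ := mem_image.1 ht
    replace hx : (s, w) ≠ 0 := by simpa using hx
    rw [card_eq_two]
    refine ⟨(s, w), (-s, -w), ?_, ?_⟩
    · intro h
      obtain ⟨h1, h3⟩ := Prod.mk.inj h
      refine hx (Prod.ext ?_ ?_)
      · exact (mul_eq_zero.1 (by linear_combination h1 : 2 * s = 0)).resolve_left h2
      · exact (mul_eq_zero.1 (by linear_combination h3 : 2 * w = 0)).resolve_left h2
    · ext ⟨s', w'⟩
      simp only [mem_filter, mem_univ, true_and, mem_insert, mem_singleton, f, Prod.mk.injEq]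
      constructor
      · rintro ⟨hne, h1, h3⟩
        have key : (w ^ 2 - w' ^ 2) * (w ^ 2 + k * s' ^ 2) = 0 := by
          linear_combination (-w ^ 2) * h3 - k * (s' * w' + s * w) * h1
        have hww : w ^ 2 = w' ^ 2 := by
          rcases mul_eq_zero.1 key with h | h
          · linear_combination h
          · obtain ⟨rfl, rfl⟩ := eq_zero_of_sq_eq_mul_sq (s := s') (w := w) hk
              (by linear_combination h)
            obtain ⟨-, rfl⟩ := eq_zero_of_sq_eq_mul_sq (s := s) (w := w') hk
              (by linear_combination h3)
            rfl
        have hss : s' ^ 2 = s ^ 2 := by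
          have hk0 : k ≠ 0 := by rintro rfl; simp at hk
          exact mul_left_cancel₀ hk0 (by linear_combination -h3 - hww)
        by_cases hw : w = 0
        · subst hw
          have hw' : w' = 0 := by simpa using hww.symm
          subst hw'
          simpa using sq_eq_sq_iff_eq_or_eq_neg.1 hss
        · rcases sq_eq_sq_iff_eq_or_eq_neg.1 hww with rfl | rfl
          · exact Or.inl ⟨mul_right_cancel₀ hw h1, rfl⟩
          · refine Or.inr ⟨mul_right_cancel₀ (neg_ne_zero.1 hw) ?_, by simp⟩
            linear_combination h1
      · rintro (⟨rfl, rfl⟩ | ⟨rfl, rfl⟩)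
        · exact ⟨hx, rfl, rfl⟩
        · exact ⟨fun h => hx (by simpa using h), by ring, by ring⟩
  have htot := card_eq_sum_card_image f ({x | x ≠ 0} : Finset (ZMod p × ZMod p))
  rw [sum_congr rfl hfib, sum_const, smul_eq_mul, ← himg] at htot
  have hne : #({x | x ≠ 0} : Finset (ZMod p × ZMod p)) + 1 = p ^ 2 := by
    have : ({x | x ≠ 0} : Finset (ZMod p × ZMod p)) = univ.erase 0 := by ext; simp
    rw [this, card_erase_add_one (mem_univ _), card_univ, Fintype.card_prod, ZMod.card, sq]
  omega

theorem dens_not_solvable_mul (hp : p ≠ 2) {r : ZMod p} (hr : ¬ IsSquare (-2 * r))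
    {η : ℤ_[p]} (hη : IsSquare (toZMod η)) :
    (dens fun b c D : ℤ_[p] => ¬ Solvable 1 (2 * lift r b) η (p * c) (p * D)) =
      1 - ((p : ℝ) ^ 2)⁻¹ + ((p : ℝ) ^ 2)⁻¹ *
        dens fun b c D : ℤ_[p] => ¬ Solvable 1 (2 * lift r b) (p ^ 2 * η) c D := by
  have h2 := two_ne_zero_zmod hp
  obtain ⟨e, he⟩ := hη
  have hr0 : r ≠ 0 := by rintro rfl; simp at hr
  have hzero : ∀ (b s w c D : ℤ_[p]), s * w = p * c →
      1 * w ^ 2 = p * D + 2 * lift r b * s ^ 2 + η * s ^ 4 → toZMod s = 0 ∧ toZMod w = 0 := by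
    intro b s w c D h1 h3
    replace h1 := congrArg toZMod h1
    replace h3 := congrArg toZMod h3
    simp [toZMod_lift, he] at h1 h3
    generalize toZMod s = s at *
    generalize toZMod w = w at *
    rcases h1 with rfl | rfl
    · simpa using h3
    · refine ⟨?_, rfl⟩
      by_contra hs
      refine hr ⟨e * s, mul_left_cancel₀ (pow_ne_zero 2 hs) ?_⟩
      linear_combination h3
  rw [dens_eq_of_snd_trd]
  · congr 2
    refine dens_congr fun b c D => not_congr ?_
    rw [← mul_assoc, ← mul_assoc, ← sq]
    refine solvable_mul_sq_iff fun s w h1 h3 => hzero b s w (p * c) (p * D) ?_ ?_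
    · rw [h1]; ring
    · rw [h3]; ring
  · rintro b c D hne ⟨s, w, h1, h3⟩
    obtain ⟨hs, hw⟩ := hzero b s w c D h1 h3
    obtain ⟨s, rfl⟩ := (toZMod_eq_zero_iff s).1 hs
    obtain ⟨w, rfl⟩ := (toZMod_eq_zero_iff w).1 hw
    refine hne ⟨(toZMod_eq_zero_iff c).2 ⟨s * w, ?_⟩, (toZMod_eq_zero_iff D).2
      ⟨w ^ 2 - 2 * lift r b * s ^ 2 - η * p ^ 2 * s ^ 4, ?_⟩⟩
    · exact mul_left_cancel₀ natCast_prime_ne_zero (by linear_combination -h1)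
    · exact mul_left_cancel₀ natCast_prime_ne_zero (by linear_combination -h3)

theorem dens_not_solvable_of_not_isSquare (hp : p ≠ 2) {r : ZMod p} (hr : ¬ IsSquare (-2 * r))
    (η : ℤ_[p]) :
    (dens fun b c D : ℤ_[p] => ¬ Solvable 1 (2 * lift r b) (p * η) c D) =
      ((p : ℝ) ^ 2 + 2) / (2 * ((p : ℝ) ^ 2 + 1)) := by
  classical
  have h2 := two_ne_zero_zmod hp
  have hr' : ¬ IsSquare (-(2 * r)) := by rwa [← neg_mul]
  have hp1 : (1 : ℝ) < p := by exact_mod_cast (Fact.out : p.Prime).one_lt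
  refine eq_of_contraction (g := fun η : ℤ_[p] =>
    (dens fun b c D : ℤ_[p] => ¬ Solvable 1 (2 * lift r b) (p * η) c D))
    (f := fun η => p ^ 2 * η) (ρ := ((p : ℝ) ^ 4)⁻¹)
    (a := ((p : ℝ) ^ 2 - 1) / (2 * (p : ℝ) ^ 2) + ((p : ℝ) ^ 2 - 1) / (p : ℝ) ^ 4)
    (by positivity) (inv_lt_one_of_one_lt₀ (one_lt_pow₀ hp1 (by norm_num)))
    (fun _ => abs_dens_le_one _) ?_ ?_ η
  swap
  · field_simp
    ring
  intro η
  have hmod : ∀ b c D : ℤ_[p], Solvable 1 (2 * lift r b) (p * η) c D →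
      Solvable 1 (2 * r) 0 (toZMod c) (toZMod D) := fun b c D h => by
    simpa [toZMod_lift] using h.map toZMod
  have hlevel : (dens fun b c D : ℤ_[p] => ¬ Solvable 1 (2 * lift r b) (p * η) (p * c) (p * D)) =
      1 - ((p : ℝ) ^ 2)⁻¹ + ((p : ℝ) ^ 2)⁻¹ *
        dens fun b c D : ℤ_[p] => ¬ Solvable 1 (2 * lift r b) (p * (p ^ 2 * η)) c D := by
    rw [dens_not_solvable_mul hp hr (by simp)]
    simp only [mul_left_comm]
  have hsum : ∑ t : ZMod p × ZMod p, (dens fun b c D : ℤ_[p] =>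
      ¬ Solvable 1 (2 * lift r b) (p * η) (lift t.1 c) (lift t.2 D)) =
      ((p : ℝ) ^ 2 - 1) / 2 + dens fun b c D : ℤ_[p] =>
        ¬ Solvable 1 (2 * lift r b) (p * η) (p * c) (p * D) := by
    let f : ZMod p × ZMod p → ℝ := fun t => dens fun b c D : ℤ_[p] =>
      ¬ Solvable 1 (2 * lift r b) (p * η) (lift t.1 c) (lift t.2 D)
    have hf : ∀ t, f t = (1 - if t ≠ 0 ∧ Solvable 1 (2 * r) 0 t.1 t.2 then 1 else 0) +
        if t = 0 then f 0 - 1 else 0 := by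
      intro t
      by_cases h0 : t = 0
      · simp [h0]
      by_cases hs : Solvable 1 (2 * r) 0 t.1 t.2
      · simp only [h0, hs, Ne, not_false_iff, true_and, if_true, if_false]
        simp only [sub_self, add_zero]
        refine dens_eq_zero fun b c D => not_not.2 ?_
        obtain ⟨s, w, h1, h3⟩ := hs
        refine solvable_of_toZMod (s := s) (w := w) (by rwa [toZMod_lift])
          (by simpa [toZMod_lift] using h3) ?_
        simp only [map_one, map_mul, toZMod_lift, toZMod_ofNat, map_natCast, CharP.cast_eq_zero]
        intro hJ
        have hJ' : w ^ 2 = -(2 * r) * s ^ 2 := mul_left_cancel₀ h2 (by linear_combination hJ)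
        obtain ⟨rfl, rfl⟩ := eq_zero_of_sq_eq_mul_sq hr' hJ'
        refine h0 (Prod.ext ?_ ?_)
        · simpa using h1.symm
        · simpa using h3.symm
      · simp only [h0, hs, and_false, if_false, sub_zero, add_zero]
        refine dens_eq_one fun b c D h => hs ?_
        simpa only [toZMod_lift] using hmod _ _ _ h
    have hcard := card_norm_form hp hr'
    have hcard' : 2 * (Finset.card {t : ZMod p × ZMod p | t ≠ 0 ∧
        Solvable 1 (2 * r) 0 t.1 t.2} : ℝ) + 1 = (p : ℝ) ^ 2 := by exact_mod_cast hcard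
    have hf0 : f 0 = dens fun b c D : ℤ_[p] =>
        ¬ Solvable 1 (2 * lift r b) (p * η) (p * c) (p * D) := by
      simp only [f, Prod.fst_zero, Prod.snd_zero, lift_zero]
    change ∑ t, f t = _
    rw [← hf0, Finset.sum_congr rfl fun t _ => hf t, Finset.sum_add_distrib,
      Finset.sum_sub_distrib, Finset.sum_boole]
    simp only [Finset.sum_const, Finset.sum_ite_eq', Finset.mem_univ, if_true, Finset.card_univ,
      Fintype.card_prod, ZMod.card, nsmul_eq_mul, Nat.cast_mul]
    linarith
  change (dens fun b c D : ℤ_[p] => ¬ Solvable 1 (2 * lift r b) (p * η) c D) = _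
  rw [dens_split_snd_trd, hsum, hlevel]
  field_simp
  ring

theorem dens_not_red_of_not_isSquare (hp : p ≠ 2) {r : ZMod p} (hr : ¬ IsSquare (-2 * r)) :
    (dens fun b c D : ℤ_[p] => ¬ Red (lift r b) (p * c) (p * D)) =
      1 - (2 * ((p : ℝ) ^ 2 + 1))⁻¹ := by
  have hp0 : (p : ℝ) ≠ 0 := by exact_mod_cast (Fact.out : p.Prime).ne_zero
  have hroot : ∀ b c D : ℤ_[p], ¬ HasRoot (lift r b) (p * c) (p * D) := by
    rintro b c D ⟨x, hx⟩
    replace hx := congrArg toZMod hx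
    simp [toZMod_lift] at hx
    exact hr ⟨2 * toZMod x, by linear_combination -2 * hx⟩
  have h : (dens fun b c D : ℤ_[p] => ¬ Red (lift r b) (p * c) (p * D)) =
      dens fun b c D : ℤ_[p] => ¬ Solvable 1 (2 * lift r b) 1 (p * c) (p * D) :=
    dens_congr fun b c D => not_congr (or_iff_right (hroot b c D))
  rw [h, dens_not_solvable_mul hp hr (by simp)]
  have := dens_not_solvable_of_not_isSquare hp hr (p : ℤ_[p])
  rw [← sq] at this
  rw [mul_one, this]
  field_simp
  ring

end NonsquareClass

section SlopeClass

open PadicInt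

variable {p : ℕ} [Fact p.Prime]

theorem isSquare_toZMod_of_solvable {b η c D : ℤ_[p]}
    (h : Solvable 1 (2 * (p * b)) (p ^ 2 * η) c D) : IsSquare (toZMod D) := by
  obtain ⟨s, w, -, h⟩ := h
  replace h := congrArg toZMod h
  simp at h
  exact ⟨toZMod w, by rw [← h, sq]⟩

theorem solvable_of_isSquare_toZMod (hp : p ≠ 2) {b η c D : ℤ_[p]} (h0 : toZMod D ≠ 0)
    (h : IsSquare (toZMod D)) : Solvable 1 (2 * (p * b)) (p ^ 2 * η) c D := by
  have h2 := two_ne_zero_zmod hp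
  obtain ⟨w, hw⟩ := h
  have hw0 : w ≠ 0 := by rintro rfl; simp [hw] at h0
  refine solvable_of_toZMod (s := toZMod c / w) (w := w) (by field_simp) (by simp [hw]; ring) ?_
  simpa [hw0] using h2

theorem isSquare_toZMod_of_solvable' {r : ZMod p} {b η c D : ℤ_[p]}
    (h : Solvable (p : ℤ_[p]) (2 * lift r b) (p * η) c D) : IsSquare (-2 * r * toZMod D) := by
  obtain ⟨s, w, -, h⟩ := h
  replace h := congrArg toZMod h
  simp [toZMod_lift] at h
  exact ⟨2 * r * toZMod s, by linear_combination (2 * r) * h⟩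

theorem solvable_of_isSquare_toZMod' (hp : p ≠ 2) {r : ZMod p} (hr : r ≠ 0) {b η c D : ℤ_[p]}
    (h0 : toZMod D ≠ 0) (h : IsSquare (-2 * r * toZMod D)) :
    Solvable (p : ℤ_[p]) (2 * lift r b) (p * η) c D := by
  have h2 := two_ne_zero_zmod hp
  obtain ⟨x, hx⟩ := h
  have hx0 : x ≠ 0 := by rintro rfl; simp [h2, hr, h0] at hx
  refine solvable_of_toZMod (s := x / (2 * r)) (w := toZMod c / (x / (2 * r)))
    (by field_simp) ?_ ?_
  · simp [toZMod_lift]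
    field_simp
    linear_combination hx
  · simp [toZMod_lift, h2, hr, hx0]

theorem solvable_mul_iff {b η c D : ℤ_[p]} :
    Solvable 1 (2 * (p * b)) (p ^ 2 * η) (p * c) (p * D) ↔
      Solvable (p : ℤ_[p]) (2 * b) (p * η) c D := by
  have hp := natCast_prime_ne_zero (p := p)
  constructor
  · rintro ⟨s, w, h1, h2⟩
    have hw : toZMod w = 0 := by simpa using congrArg toZMod h2
    obtain ⟨w, rfl⟩ := (toZMod_eq_zero_iff w).1 hw
    exact ⟨s, w, mul_left_cancel₀ hp (by linear_combination h1),
      mul_left_cancel₀ hp (by linear_combination h2)⟩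
  · rintro ⟨s, w, h1, h2⟩
    exact ⟨s, p * w, by linear_combination (p : ℤ_[p]) * h1,
      by linear_combination (p : ℤ_[p]) * h2⟩

theorem solvable_mul_iff' (hp2 : p ≠ 2) {r : ZMod p} (hr : r ≠ 0) {b η c D : ℤ_[p]} :
    Solvable (p : ℤ_[p]) (2 * lift r b) (p * η) (p * c) (p * D) ↔
      Solvable 1 (2 * (p * lift r b)) (p ^ 2 * (p ^ 2 * η)) c D := by
  have hp := natCast_prime_ne_zero (p := p)
  constructor
  · rintro ⟨s, w, h1, h2⟩
    have hs : toZMod s = 0 := by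
      simpa [toZMod_lift, hr, two_ne_zero_zmod hp2] using congrArg toZMod h2
    obtain ⟨s, rfl⟩ := (toZMod_eq_zero_iff s).1 hs
    exact ⟨s, w, mul_left_cancel₀ hp (by linear_combination h1),
      mul_left_cancel₀ hp (by linear_combination h2)⟩
  · rintro ⟨s, w, h1, h2⟩
    exact ⟨p * s, w, by linear_combination (p : ℤ_[p]) * h1,
      by linear_combination (p : ℤ_[p]) * h2⟩

theorem dens_not_solvable_slope (hp : p ≠ 2) {r : ZMod p} (hr : r ≠ 0) (η : ℤ_[p]) :
    (dens fun b c D : ℤ_[p] => ¬ Solvable 1 (2 * (p * lift r b)) (p ^ 2 * η) c D) =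
      ((p : ℝ) + 2) / (2 * ((p : ℝ) + 1)) := by
  have h2 := two_ne_zero_zmod hp
  have hp1 : (1 : ℝ) < p := by exact_mod_cast (Fact.out : p.Prime).one_lt
  have hn : ∀ η : ℤ_[p],
      (dens fun b c D : ℤ_[p] => ¬ Solvable 1 (2 * (p * lift r b)) (p ^ 2 * η) c D) =
      (p : ℝ)⁻¹ * ((1 - (p : ℝ)⁻¹) * 1 + (p : ℝ)⁻¹ *
        (dens fun b c D : ℤ_[p] => ¬ Solvable (p : ℤ_[p]) (2 * lift r b) (p * η) c D) +
        (p - 1) / 2 * (0 + 1)) := by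
    intro η
    rw [dens_split_trd, sum_eq_of_isSquare hp one_ne_zero (B := 0) (C := 1) rfl]
    · simp only [lift_zero]
      rw [dens_eq_of_snd (A := 1)]
      · simp only [solvable_mul_iff]
      · refine fun x hx => dens_eq_one fun b c D h => ?_
        obtain ⟨s, w, h1, h3⟩ := h
        have hw : toZMod w = 0 := by simpa using congrArg toZMod h3
        replace h1 := congrArg toZMod h1
        simp [toZMod_lift, hw] at h1
        exact hx h1.symm
    · intro x hx hsq
      refine dens_eq_zero fun b c D => not_not.2 (solvable_of_isSquare_toZMod hp ?_ ?_)
      · rwa [toZMod_lift]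
      · simpa [toZMod_lift] using hsq
    · intro x hx
      refine dens_eq_one fun b c D h => hx ?_
      simpa [toZMod_lift] using isSquare_toZMod_of_solvable h
  have hm : ∀ η : ℤ_[p],
      (dens fun b c D : ℤ_[p] => ¬ Solvable (p : ℤ_[p]) (2 * lift r b) (p * η) c D) =
      (p : ℝ)⁻¹ * ((1 - (p : ℝ)⁻¹) * 1 + (p : ℝ)⁻¹ *
        (dens fun b c D : ℤ_[p] =>
          ¬ Solvable 1 (2 * (p * lift r b)) (p ^ 2 * (p ^ 2 * η)) c D) +
        (p - 1) / 2 * (0 + 1)) := by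
    intro η
    rw [dens_split_trd, sum_eq_of_isSquare hp (k := -2 * r)
      (mul_ne_zero (neg_ne_zero.2 h2) hr) (B := 0) (C := 1) rfl]
    · simp only [lift_zero]
      rw [dens_eq_of_snd (A := 1)]
      · simp only [solvable_mul_iff' hp hr]
      · refine fun x hx => dens_eq_one fun b c D h => ?_
        obtain ⟨s, w, h1, h3⟩ := h
        have hs : toZMod s = 0 := by
          simpa [toZMod_lift, hr, h2] using congrArg toZMod h3
        replace h1 := congrArg toZMod h1
        simp [toZMod_lift, hs] at h1
        exact hx h1.symm
    · intro x hx hsq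
      refine dens_eq_zero fun b c D => not_not.2 (solvable_of_isSquare_toZMod' hp hr ?_ ?_)
      · rwa [toZMod_lift]
      · rwa [toZMod_lift]
    · intro x hx
      refine dens_eq_one fun b c D h => hx ?_
      simpa only [toZMod_lift] using isSquare_toZMod_of_solvable' h
  refine eq_of_contraction (g := fun η : ℤ_[p] =>
    (dens fun b c D : ℤ_[p] => ¬ Solvable 1 (2 * (p * lift r b)) (p ^ 2 * η) c D))
    (f := fun η => p ^ 2 * η) (ρ := ((p : ℝ) ^ 4)⁻¹)
    (a := (1 + ((p : ℝ) ^ 2)⁻¹) * ((p : ℝ)⁻¹ * (1 - (p : ℝ)⁻¹ + (p - 1) / 2)))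
    (by positivity) (inv_lt_one_of_one_lt₀ (one_lt_pow₀ hp1 (by norm_num)))
    (fun _ => abs_dens_le_one _) ?_ ?_ η
  · intro η
    rw [hn, hm]
    ring
  · field_simp
    ring

theorem exists_linear_root (hp : p ≠ 2) (G : ℤ_[p][X]) {c : ℤ_[p]} (hc : toZMod c ≠ 0)
    (D : ℤ_[p]) : ∃ y, p * G.eval y + 4 * c * y = D := by
  have h4 : (4 : ZMod p) ≠ 0 := by
    convert pow_ne_zero 2 (two_ne_zero_zmod hp) using 1; norm_num
  obtain ⟨a, ha⟩ := exists_toZMod_eq (toZMod D / (4 * toZMod c))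
  obtain ⟨z, hz, -⟩ := exists_root_of_toZMod (C (p : ℤ_[p]) * G + C (4 * c) * X - C D) a
    (by simp [ha, -map_natCast]; field_simp; simp) (by simpa using ⟨h4, hc⟩)
  exact ⟨z, by simpa [sub_eq_zero] using hz⟩

theorem slope_solvable_iff {b c D : ℤ_[p]} :
    Solvable 1 (2 * (p * b)) 1 (p ^ 2 * c) (p ^ 2 * D) ↔
      Solvable 1 (2 * (p * b)) (p ^ 2 * 1) c D := by
  refine solvable_mul_sq_iff fun s w h1 h3 => ?_
  replace h1 := congrArg toZMod h1
  replace h3 := congrArg toZMod h3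
  simp at h1 h3
  rcases h1 with h | h
  · exact ⟨h, by simpa [h] using h3⟩
  · exact ⟨by simpa [h] using h3.symm, h⟩

theorem toZMod_eq_zero_of_root {b c D x : ℤ_[p]} (hp : p ≠ 2)
    (h : (2 * x ^ 2 + p * b) ^ 2 + 4 * (p * c) * x = p * D) : toZMod x = 0 := by
  simpa [two_ne_zero_zmod hp] using congrArg toZMod h

theorem slope_hasRoot (hp : p ≠ 2) {b c D : ℤ_[p]}
    (h : HasRoot (p * b) (p ^ 2 * c) (p ^ 2 * D)) : toZMod D = toZMod b ^ 2 := by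
  obtain ⟨x, hx⟩ := h
  obtain ⟨y, rfl⟩ := (toZMod_eq_zero_iff x).1 (toZMod_eq_zero_of_root hp (b := b) (c := (p : ℤ_[p]) * c)
    (D := (p : ℤ_[p]) * D) (by linear_combination hx))
  have : (2 * p * y ^ 2 + b) ^ 2 + 4 * p * c * y = D :=
    mul_left_cancel₀ (pow_ne_zero 2 (natCast_prime_ne_zero (p := p))) (by linear_combination hx)
  simpa using (congrArg toZMod this).symm

theorem not_red_slope_three (hp : p ≠ 2) {b c D : ℤ_[p]} (hD : toZMod D ≠ 0) :
    ¬ Red (p * (p * b)) (p ^ 2 * (p * c)) (p ^ 2 * (p * D)) := by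
  have hp0 := natCast_prime_ne_zero (p := p)
  rintro (⟨x, hx⟩ | h)
  · obtain ⟨y, rfl⟩ := (toZMod_eq_zero_iff x).1 (toZMod_eq_zero_of_root hp (b := (p : ℤ_[p]) * b)
      (c := (p : ℤ_[p]) ^ 2 * c) (D := (p : ℤ_[p]) ^ 2 * D) (by linear_combination hx))
    exact hD ((toZMod_eq_zero_iff D).2 ⟨(2 * y ^ 2 + b) ^ 2 + 4 * c * y,
      mul_left_cancel₀ (pow_ne_zero 3 hp0) (by linear_combination -hx)⟩)
  · obtain ⟨s, w, -, h⟩ := slope_solvable_iff.1 h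
    have hw : toZMod w = 0 := by simpa using congrArg toZMod h
    obtain ⟨w, rfl⟩ := (toZMod_eq_zero_iff w).1 hw
    exact hD ((toZMod_eq_zero_iff D).2 ⟨w ^ 2 - 2 * b * s ^ 2 - s ^ 4,
      mul_left_cancel₀ hp0 (by linear_combination -h)⟩)

theorem red_scale_iff (hp : p ≠ 2) {b c D : ℤ_[p]} :
    Red (p * (p * b)) (p ^ 2 * (p * c)) (p ^ 2 * (p * (p * D))) ↔ Red b c D := by
  have hp0 := natCast_prime_ne_zero (p := p)
  refine or_congr ⟨?_, ?_⟩ (slope_solvable_iff.trans ⟨?_, ?_⟩)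
  · rintro ⟨x, hx⟩
    obtain ⟨y, rfl⟩ := (toZMod_eq_zero_iff x).1 (toZMod_eq_zero_of_root hp (b := (p : ℤ_[p]) * b)
      (c := (p : ℤ_[p]) ^ 2 * c) (D := (p : ℤ_[p]) ^ 2 * (p * D)) (by linear_combination hx))
    exact ⟨y, mul_left_cancel₀ (pow_ne_zero 4 hp0) (by linear_combination hx)⟩
  · rintro ⟨x, hx⟩
    exact ⟨p * x, by linear_combination (p : ℤ_[p]) ^ 4 * hx⟩
  · rintro ⟨s, w, h1, h⟩
    have hw : toZMod w = 0 := by simpa using congrArg toZMod h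
    obtain ⟨w, rfl⟩ := (toZMod_eq_zero_iff w).1 hw
    exact ⟨s, w, mul_left_cancel₀ hp0 (by linear_combination h1),
      mul_left_cancel₀ (pow_ne_zero 2 hp0) (by linear_combination h)⟩
  · rintro ⟨s, w, h1, h⟩
    exact ⟨s, p * w, by linear_combination (p : ℤ_[p]) * h1,
      by linear_combination (p : ℤ_[p]) ^ 2 * h⟩

theorem dens_not_red_slope (hp : p ≠ 2) :
    (dens fun b c D : ℤ_[p] => ¬ Red (p * b) (p ^ 2 * c) (p ^ 2 * D)) =
      (1 - (p : ℝ)⁻¹) * (((p : ℝ) + 2) / (2 * ((p : ℝ) + 1))) + (p : ℝ)⁻¹ *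
        ((p : ℝ)⁻¹ * ((p : ℝ)⁻¹ * (1 - (p : ℝ)⁻¹ + (p : ℝ)⁻¹ *
          dens fun b c D : ℤ_[p] => ¬ Red b c D) + (p - 1) / 2)) := by
  rw [dens_eq_of_fst (A := ((p : ℝ) + 2) / (2 * ((p : ℝ) + 1)))]
  swap
  · intro r hr
    rw [← dens_not_solvable_slope hp hr 1]
    refine dens_congr fun b c D => not_congr ?_
    rw [Red, slope_solvable_iff, or_iff_right_of_imp]
    intro h
    have hD := slope_hasRoot hp h
    rw [toZMod_lift] at hD
    exact solvable_of_isSquare_toZMod hp (by rw [hD]; exact pow_ne_zero 2 hr) (hD ▸ IsSquare.sq r)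
  congr 2
  rw [dens_split_trd]
  congr 1
  rw [sum_eq_of_isSquare hp one_ne_zero (B := 0) (C := 1) rfl, zero_add, mul_one]
  · congr 1
    simp only [lift_zero]
    rw [dens_eq_of_snd (A := 0), mul_zero, zero_add]
    · congr 1
      rw [dens_eq_of_trd (A := 1), mul_one]
      · simp only [red_scale_iff hp]
      · refine fun r hr => dens_eq_one fun b c D => not_red_slope_three hp ?_
        rwa [toZMod_lift]
    · refine fun r hr => dens_eq_zero fun b c D => not_not.2 (Or.inl ?_)
      obtain ⟨y, hy⟩ := exists_linear_root hp ((2 * X ^ 2 + C b) ^ 2) (c := lift r c)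
        (by rwa [toZMod_lift]) D
      simp at hy
      exact ⟨p * y, by linear_combination (p : ℤ_[p]) ^ 3 * hy⟩
  · intro x hx hsq
    refine dens_eq_zero fun b c D => not_not.2 (Or.inr (slope_solvable_iff.2 ?_))
    refine solvable_of_isSquare_toZMod hp ?_ ?_
    · rwa [toZMod_lift]
    · simpa [toZMod_lift] using hsq
  · intro x hx
    refine dens_eq_one fun b c D h => hx ?_
    rcases h with h | h
    · have := slope_hasRoot hp h
      rw [toZMod_lift] at this
      rw [one_mul, this]
      exact IsSquare.sq _
    · simpa [toZMod_lift] using isSquare_toZMod_of_solvable (slope_solvable_iff.1 h)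

theorem not_red_of_eisenstein (hp : p ≠ 2) {b c D : ℤ_[p]} (hD : toZMod D ≠ 0) :
    ¬ Red (p * b) (p * c) (p * D) := by
  have hp0 := natCast_prime_ne_zero (p := p)
  rintro (⟨x, hx⟩ | ⟨s, w, h1, h⟩)
  · obtain ⟨y, rfl⟩ := (toZMod_eq_zero_iff x).1 (toZMod_eq_zero_of_root hp hx)
    exact hD ((toZMod_eq_zero_iff D).2 ⟨(2 * p * y ^ 2 + b) ^ 2 + 4 * c * y,
      mul_left_cancel₀ hp0 (by linear_combination -hx)⟩)
  · have hsw : toZMod s = 0 ∧ toZMod w = 0 := by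
      replace h1 := congrArg toZMod h1
      replace h := congrArg toZMod h
      simp at h1 h
      rcases h1 with h1 | h1
      · exact ⟨h1, by simpa [h1] using h⟩
      · exact ⟨by simpa [h1] using h.symm, h1⟩
    obtain ⟨s, rfl⟩ := (toZMod_eq_zero_iff s).1 hsw.1
    obtain ⟨w, rfl⟩ := (toZMod_eq_zero_iff w).1 hsw.2
    exact hD ((toZMod_eq_zero_iff D).2 ⟨w ^ 2 - 2 * p * b * s ^ 2 - p ^ 2 * s ^ 4,
      mul_left_cancel₀ hp0 (by linear_combination -h)⟩)

theorem dens_not_red_totally_ramified (hp : p ≠ 2) :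
    (dens fun b c D : ℤ_[p] => ¬ Red (p * b) (p * c) (p * D)) =
      1 - (p : ℝ)⁻¹ + ((p : ℝ) ^ 2)⁻¹ *
        dens fun b c D : ℤ_[p] => ¬ Red (p * b) (p ^ 2 * c) (p ^ 2 * D) := by
  rw [dens_eq_of_trd (A := 1), dens_eq_of_snd (A := 0)]
  · simp only [← mul_assoc, ← sq]
    ring
  · refine fun r hr => dens_eq_zero fun b c D => not_not.2 (Or.inl ?_)
    obtain ⟨y, hy⟩ := exists_linear_root hp (C (4 * (p : ℤ_[p])) * X ^ 4 + C (4 * b) * X ^ 2)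
      (c := lift r c) (by rwa [toZMod_lift]) (D - b ^ 2)
    simp at hy
    exact ⟨p * y, by linear_combination (p : ℤ_[p]) ^ 2 * hy⟩
  · refine fun r hr => dens_eq_one fun b c D => not_red_of_eisenstein hp ?_
    rwa [toZMod_lift]

theorem dens_not_red (hp : p ≠ 2) :
    (dens fun b c D : ℤ_[p] => ¬ Red b c D) =
      ((p : ℝ) ^ 12 + (p : ℝ) ^ 11 + 2 * (p : ℝ) ^ 10 + 4 * (p : ℝ) ^ 9 -
          2 * (p : ℝ) ^ 8 + (p : ℝ) ^ 7 + 3 * (p : ℝ) ^ 6 - 6 * (p : ℝ) ^ 5 +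
          6 * (p : ℝ) ^ 4 - 4 * (p : ℝ) ^ 3 - 2 * (p : ℝ) ^ 2 - 4) /
        (4 * ((p : ℝ) + 1) * ((p : ℝ) ^ 2 + 1) * ((p : ℝ) ^ 9 - 1)) := by
  have hp1 : (1 : ℝ) < p := by exact_mod_cast (Fact.out : p.Prime).one_lt
  have h9 : (p : ℝ) ^ 9 - 1 ≠ 0 := (sub_pos.2 (one_lt_pow₀ hp1 (by norm_num))).ne'
  have h := dens_not_red_eq hp fun r hr => dens_not_red_of_not_isSquare hp hr
  rw [dens_not_red_totally_ramified hp, dens_not_red_slope hp] at h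
  generalize (dens fun b c D : ℤ_[p] => ¬ Red b c D) = α at h ⊢
  have h1 : (p : ℝ) + 1 ≠ 0 := by positivity
  have h2 : (p : ℝ) ^ 2 + 1 ≠ 0 := by positivity
  have h0 : (p : ℝ) ≠ 0 := by positivity
  rw [eq_div_iff (by positivity)]
  field_simp at h
  linear_combination h / 4

end SlopeClass

end QuarticDensity

/-- Main quartic theorem: for odd `p`, the Haar-measure proportion of monic
degree-4 polynomials over `ℤ_p` (identified with `ℤ_p⁴` via their non-leading
coefficients) that are irreducible equals the stated rational function of `p`. -/
theorem stmt_19 (p : ℕ) [Fact p.Prime] (hodd : p ≠ 2)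
    (μ : Measure (Fin 4 → ℤ_[p])) [μ.IsAddHaarMeasure] :
    (μ {c : Fin 4 → ℤ_[p] |
        Irreducible (X ^ 4 + ∑ i : Fin 4, C (c i) * X ^ (i : ℕ))}).toReal /
      (μ Set.univ).toReal =
      ((p : ℝ) ^ 12 + (p : ℝ) ^ 11 + 2 * (p : ℝ) ^ 10 + 4 * (p : ℝ) ^ 9 -
          2 * (p : ℝ) ^ 8 + (p : ℝ) ^ 7 + 3 * (p : ℝ) ^ 6 - 6 * (p : ℝ) ^ 5 +
          6 * (p : ℝ) ^ 4 - 4 * (p : ℝ) ^ 3 - 2 * (p : ℝ) ^ 2 - 4) /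
        (4 * ((p : ℝ) + 1) * ((p : ℝ) ^ 2 + 1) * ((p : ℝ) ^ 9 - 1)) := by
  have h4 : IsUnit (4 : ℤ_[p]) := QuarticDensity.isUnit_of_toZMod_ne_zero (by
    rw [QuarticDensity.toZMod_ofNat]
    convert pow_ne_zero 2 (QuarticDensity.two_ne_zero_zmod hodd) using 1
    norm_num)
  obtain ⟨v, hv⟩ := h4.exists_right_inv
  rw [← QuarticDensity.dens_not_red hodd, ← QuarticDensity.haar_proportion_eq_dens h4 v μ]
  simp only [← QuarticDensity.irreducible_quartic_iff_not_red hv]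
  rfl
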